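/- Let Γ ⊂ ℂ be a quasismooth Jordan curve, n ∈ ℕ, ζ ∈ Γ, and let c₃, c₄ > 0. Suppose q : Γ → ℂ is a Borel function satisfying (a) 1/c₃ ≤ |q(z)| ≤ c₃ whenever z ∈ Γ with |ζ − z| ≤ ρ_{1/n}(z), and (b) |q(z)| ≤ c₄ (ρ_{1/n}(ζ)/|ζ − z|)² whenever z ∈ Γ with |ζ − z| > ρ_{1/n}(z). Then for every r ≥ 1 there is a constant c₇ > 0 depending only on Γ, r, c₃, c₄ such that ρ_{1/n}(ζ)/c₇ ≤ ∫_Γ |q(z)|^r |dz| ≤ c₇ ρ_{1/n}(ζ). -/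

import Mathlib

open MeasureTheory Metric Set Filter Bornology Complex
open scoped ENNReal NNReal Topology

noncomputable section

/-- `Γ` is a Jordan curve: the image of an injective continuous map of the unit circle. -/
def IsJordanCurve (Γ : Set ℂ) : Prop :=
  ∃ γ : ℂ → ℂ, ContinuousOn γ (Metric.sphere (0:ℂ) 1) ∧
    Set.InjOn γ (Metric.sphere (0:ℂ) 1) ∧ Γ = γ '' (Metric.sphere (0:ℂ) 1)

/-- A (closed) subarc of `Γ`: a closed connected subset. -/
def IsSubarc (Γ J : Set ℂ) : Prop :=
  J ⊆ Γ ∧ IsClosed J ∧ IsPreconnected J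

/-- `|Γ(z₁,z₂)|`: the length (1-dimensional Hausdorff measure) of the shorter subarc of `Γ`
joining `z₁` and `z₂`, described as the infimum of lengths of closed connected subsets of `Γ`
containing both points. -/
def shorterArcLength (Γ : Set ℂ) (z₁ z₂ : ℂ) : ℝ≥0∞ :=
  ⨅ (J : Set ℂ) (_ : IsSubarc Γ J ∧ z₁ ∈ J ∧ z₂ ∈ J), μH[1] J

/-- `J` is (a realization of) the shorter arc `Γ(z₁,z₂)` of `Γ` between `z₁` and `z₂`. -/
def IsShorterArc (Γ : Set ℂ) (z₁ z₂ : ℂ) (J : Set ℂ) : Prop :=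
  IsSubarc Γ J ∧ z₁ ∈ J ∧ z₂ ∈ J ∧ μH[1] J = shorterArcLength Γ z₁ z₂

/-- `Γ` is quasismooth (in the sense of Lavrentiev) with constant `Λ ≥ 1`:
`|Γ(z₁,z₂)| ≤ Λ |z₁ - z₂|`. -/
def IsQuasismooth (Γ : Set ℂ) (Λ : ℝ) : Prop :=
  1 ≤ Λ ∧ ∀ z₁ ∈ Γ, ∀ z₂ ∈ Γ,
    shorterArcLength Γ z₁ z₂ ≤ ENNReal.ofReal (Λ * dist z₁ z₂)

/-- The union of the unbounded connected components of `Γᶜ`; for a Jordan curve `Γ` this is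
the (unique) unbounded component `Ω` of the complement of `Γ`. -/
def unboundedComponent (Γ : Set ℂ) : Set ℂ :=
  {z | z ∉ Γ ∧ ¬ Bornology.IsBounded (connectedComponentIn Γᶜ z)}

/-- `d(A,B) := inf {|z-ζ| : z ∈ A, ζ ∈ B}`. -/
def setDist (A B : Set ℂ) : ℝ := sInf (Set.image2 dist A B)

/-- The exterior `𝔻*` of the closed unit disk (finite part). -/
def extDisk : Set ℂ := {w : ℂ | 1 < ‖w‖}

/-- `Φ` is the conformal (holomorphic bijective) map of `Ω` onto `𝔻* = {|w| > 1}` normalized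
by `Φ(∞) = ∞` and `Φ'(∞) := lim_{z→∞} Φ(z)/z > 0`. -/
def IsExtConformal (Ω : Set ℂ) (Φ : ℂ → ℂ) : Prop :=
  DifferentiableOn ℂ Φ Ω ∧ Set.BijOn Φ Ω extDisk ∧
    ∃ c : ℝ, 0 < c ∧
      Filter.Tendsto (fun z => Φ z / z) (Bornology.cobounded ℂ) (nhds (c : ℂ))

/-- `Φ` additionally extends to a homeomorphism of `closure Ω` onto `{|w| ≥ 1}`. -/
def IsExtConformalClosure (Ω : Set ℂ) (Φ : ℂ → ℂ) : Prop :=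
  IsExtConformal Ω Φ ∧ ContinuousOn Φ (closure Ω) ∧
    Set.BijOn Φ (closure Ω) {w : ℂ | 1 ≤ ‖w‖}

/-- The level curve `Γ_δ := {ζ ∈ Ω : |Φ(ζ)| = 1 + δ}`. -/
def levelCurve (Ω : Set ℂ) (Φ : ℂ → ℂ) (δ : ℝ) : Set ℂ :=
  {ζ ∈ Ω | ‖Φ ζ‖ = 1 + δ}

/-- `ρ_δ(z) := d({z}, Γ_δ)`. -/
def rho (Ω : Set ℂ) (Φ : ℂ → ℂ) (δ : ℝ) (z : ℂ) : ℝ :=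
  Metric.infDist z (levelCurve Ω Φ δ)

/-- `ν ∈ A∞(Γ)` with constant `lam ≥ 1`: `ν(J) ≤ lam · ν(S)` for every subarc `J ⊂ Γ` and
every Borel set `S ⊂ J` with `|J| ≤ 2|S|`. -/
def IsAInftyMeasure (Γ : Set ℂ) (ν : MeasureTheory.Measure ℂ) (lam : ℝ) : Prop :=
  1 ≤ lam ∧ ∀ J S : Set ℂ, IsSubarc Γ J → S ⊆ J → MeasurableSet S →
    μH[1] J ≤ 2 * μH[1] S → ν J ≤ ENNReal.ofReal lam * ν S

/-!
The exterior `Ω` of a quasismooth curve is linearly locally connected: two points of `Γ` are joined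
by a subarc whose diameter, like its length, is comparable to their distance, and by Eilenberg's
criterion `Γ ∪ L` does not separate `a` from `b` as soon as `(x - a) / (x - b)` has a continuous
logarithm on it, which can be glued from logarithms on `Γ` and on the disk or circle `L` when the
points of `Γ ∩ L` are joined by subarcs close to `L`.

Linear local connectivity makes `Φ⁻¹` weakly quasisymmetric. Otherwise two continua on different
scales in `Ω` would have preimages close to each other relative to their size, and a metric on the
separating annulus with finite area and infinite logarithmic length would contradict the
length-area inequality on circular arcs. Hence `ρ_δ(z) ≍ ρ_δ(ζ)` whenever `|ζ - z| ≤ ρ_δ(z)`.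

So `|q| ^ r` is bounded near `ζ` and decays like `(ρ_δ(ζ) / |ζ - z|) ^ (2r)` elsewhere. As `Γ` has
linear length growth, summing over dyadic annuli gives the upper bound; the lower bound comes from
the part of `Γ` within a fixed multiple of `ρ_δ(ζ)` from `ζ`.
-/

/-! ### Continuous logarithms and separation of the plane -/

section HasLogOn

variable {X Y : Type*} [TopologicalSpace X] [TopologicalSpace Y]

/-- `g` has a continuous logarithm on `K`. For compact `K ⊆ ℂ`, the points `a, b ∉ K` are not
separated by `K` exactly when `x ↦ (x - a) / (x - b)` has a continuous logarithm on `K`; this is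
how separation is decided below, in place of winding numbers. -/
def HasLogOn (K : Set X) (g : X → ℂ) : Prop :=
  ∃ l : X → ℂ, ContinuousOn l K ∧ EqOn (exp ∘ l) g K

namespace HasLogOn

variable {K L : Set X} {f g : X → ℂ}

theorem congr (h : HasLogOn K g) (hgf : EqOn g f K) : HasLogOn K f := by
  obtain ⟨l, hl, hexp⟩ := h
  exact ⟨l, hl, hexp.trans hgf⟩

theorem mono (h : HasLogOn K g) (hLK : L ⊆ K) : HasLogOn L g := by
  obtain ⟨l, hl, hexp⟩ := h
  exact ⟨l, hl.mono hLK, hexp.mono hLK⟩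

theorem comp {S : Set Y} {φ : Y → X} (h : HasLogOn K g) (hφ : ContinuousOn φ S)
    (hφK : MapsTo φ S K) : HasLogOn S (g ∘ φ) := by
  obtain ⟨l, hl, hexp⟩ := h
  exact ⟨l ∘ φ, hl.comp hφ hφK, fun y hy => hexp (hφK hy)⟩

theorem mul (hf : HasLogOn K f) (hg : HasLogOn K g) : HasLogOn K (fun x => f x * g x) := by
  obtain ⟨l, hl, hexpl⟩ := hf
  obtain ⟨m, hm, hexpm⟩ := hg
  exact ⟨fun x => l x + m x, hl.add hm, fun x hx =>
    (exp_add _ _).trans (congrArg₂ _ (hexpl hx) (hexpm hx))⟩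

theorem inv (hf : HasLogOn K f) : HasLogOn K (fun x => (f x)⁻¹) := by
  obtain ⟨l, hl, hexp⟩ := hf
  exact ⟨fun x => -l x, hl.neg, fun x hx => (exp_neg _).trans (congrArg _ (hexp hx))⟩

theorem of_mapsTo_slitPlane (hg : ContinuousOn g K) (h : MapsTo g K slitPlane) : HasLogOn K g :=
  ⟨fun x => log (g x), hg.clog h, fun _ hx => exp_log (slitPlane_ne_zero (h hx))⟩

theorem univ_of_continuous [LocallyPathConnectedSpace X] [SimplyConnectedSpace X]
    (hg : Continuous g) (h0 : ∀ x, g x ≠ 0) : HasLogOn univ g :=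
  exists_continuousOn_eqOn_exp_comp
    (Homeomorph.Set.univ X).toHomotopyEquiv.simplyConnectedSpace isOpen_univ
    hg.continuousOn (by simpa using h0)

end HasLogOn

theorem isLocallyInjective_exp : IsLocallyInjective exp := by
  refine (isLocalHomeomorph_iff_isLocalHomeomorphOn_univ.2 ?_).isLocallyInjective
  rw [← show exp ⁻¹' {0}ᶜ = univ from eq_univ_of_forall exp_ne_zero]
  exact isCoveringMapOn_exp.isLocalHomeomorphOn

/-- Both logarithms of `g` exist, but to glue them they must differ by a constant on `K ∩ L`. This
set may be disconnected, so its points are joined inside the larger domain `M` of the second one. -/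
theorem HasLogOn.union {K L M : Set X} {g : X → ℂ} (hK : IsClosed K) (hL : IsClosed L)
    (hLM : L ⊆ M) (hgK : HasLogOn K g) (hgM : HasLogOn M g)
    (hjoin : ∀ x ∈ K ∩ L, ∀ y ∈ K ∩ L, ∃ J ⊆ K ∩ M, IsPreconnected J ∧ x ∈ J ∧ y ∈ J) :
    HasLogOn (K ∪ L) g := by
  obtain ⟨l, hl, hexpl⟩ := hgK
  obtain ⟨m, hm, hexpm⟩ := hgM
  have hexp : ∀ x ∈ K ∩ M, exp (m x - l x) = 1 := fun x hx => by
    have hlm : exp (m x) = exp (l x) := (hexpm hx.2).trans (hexpl hx.1).symm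
    rw [exp_sub, hlm, div_self (exp_ne_zero _)]
  obtain ⟨c, hc, hdiff⟩ : ∃ c : ℂ, exp c = 1 ∧ ∀ x ∈ K ∩ L, m x - l x = c := by
    rcases (K ∩ L).eq_empty_or_nonempty with hempty | ⟨x₀, hx₀⟩
    · exact ⟨0, exp_zero, by simp [hempty]⟩
    · refine ⟨m x₀ - l x₀, hexp x₀ ⟨hx₀.1, hLM hx₀.2⟩, fun x hx => ?_⟩
      obtain ⟨J, hJ, hJconn, hxJ, hx₀J⟩ := hjoin x hx x₀ hx₀
      exact (T2Space.isSeparatedMap exp).constOn_of_comp isLocallyInjective_exp hJconn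
        ((hm.mono fun y hy => (hJ hy).2).sub (hl.mono fun y hy => (hJ hy).1))
        (fun y hy z hz => (hexp y (hJ hy)).trans (hexp z (hJ hz)).symm) hxJ hx₀J
  classical
  have hmL : EqOn (K.piecewise l fun x => m x - c) (fun x => m x - c) L := fun x hx => by
    by_cases hxK : x ∈ K
    · rw [piecewise_eq_of_mem _ _ _ hxK, ← hdiff x ⟨hxK, hx⟩]
      exact (sub_sub_cancel _ _).symm
    · rw [piecewise_eq_of_notMem _ _ _ hxK]
  refine ⟨K.piecewise l fun x => m x - c, ContinuousOn.union_of_isClosed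
    (hl.congr (piecewise_eqOn K _ _))
    (((hm.mono hLM).sub continuousOn_const).congr hmL) hK hL, ?_⟩
  rintro x (hx | hx)
  · exact (congrArg exp (piecewise_eqOn K _ _ hx)).trans (hexpl hx)
  · refine (congrArg exp (hmL hx)).trans ?_
    rw [exp_sub, hc, div_one]
    exact hexpm (hLM hx)

theorem continuousOn_invFunOn_image [T2Space Y] [Nonempty X] {γ : X → Y} {K : Set X}
    (hK : IsCompact K) (hγ : ContinuousOn γ K) (hinj : InjOn γ K) :
    ContinuousOn (Function.invFunOn γ K) (γ '' K) := by
  refine continuousOn_iff_isClosed.2 fun C hC =>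
    ⟨γ '' (K ∩ C), ((hK.inter_right hC).image_of_continuousOn (hγ.mono inter_subset_left)).isClosed,
      ?_⟩
  ext y
  constructor
  · rintro ⟨hyC, x, hx, rfl⟩
    rw [mem_preimage, hinj.leftInvOn_invFunOn hx] at hyC
    exact ⟨mem_image_of_mem γ ⟨hx, hyC⟩, mem_image_of_mem γ hx⟩
  · rintro ⟨⟨x, ⟨hx, hxC⟩, rfl⟩, hy⟩
    exact ⟨by rwa [mem_preimage, hinj.leftInvOn_invFunOn hx], hy⟩

theorem hasLogOn_image_Icc [T2Space Y] {γ : ℝ → Y} {s t : ℝ} (hst : s ≤ t)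
    (hγ : ContinuousOn γ (Icc s t)) (hinj : InjOn γ (Icc s t)) {g : Y → ℂ}
    (hg : ContinuousOn g (γ '' Icc s t)) (h0 : ∀ y ∈ γ '' Icc s t, g y ≠ 0) :
    HasLogOn (γ '' Icc s t) g := by
  have hγmem : ∀ u, γ (projIcc s t hst u) ∈ γ '' Icc s t := fun u =>
    mem_image_of_mem _ (Subtype.coe_prop _)
  have hγc : Continuous fun u => γ (projIcc s t hst u) :=
    hγ.comp_continuous (by fun_prop) fun _ => Subtype.coe_prop _
  have hlog : HasLogOn univ fun u => g (γ (projIcc s t hst u)) :=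
    HasLogOn.univ_of_continuous (hg.comp_continuous hγc hγmem) fun u => h0 _ (hγmem u)
  refine (hlog.comp (continuousOn_invFunOn_image isCompact_Icc hγ hinj) (mapsTo_univ _ _)).congr ?_
  rintro _ ⟨u, hu, rfl⟩
  simp only [Function.comp_apply, hinj.leftInvOn_invFunOn hu, projIcc_of_mem hst hu]

end HasLogOn

section Separation

theorem not_hasLogOn_sphere (a : ℂ) {R : ℝ} (hR : 0 < R) :
    ¬ HasLogOn (sphere a R) (fun x => x - a) := by
  rintro ⟨l, hl, hexp⟩
  let D : ℝ → ℂ := fun θ => l (circleMap a R θ) - θ * I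
  have hD : Continuous D :=
    (hl.comp_continuous (continuous_circleMap a R) fun θ => circleMap_mem_sphere a hR.le θ).sub
      (by fun_prop)
  have hDexp : ∀ θ, exp (D θ) = R := fun θ => by
    have hlθ : exp (l (circleMap a R θ)) = R * exp (θ * I) := by
      simpa [circleMap] using hexp (circleMap_mem_sphere a hR.le θ)
    rw [exp_sub, hlθ, mul_div_cancel_right₀ _ (exp_ne_zero _)]
  have hDconst : D 0 = D (2 * Real.pi) :=
    (T2Space.isSeparatedMap exp).const_of_comp isLocallyInjective_exp hD
      (fun x y => (hDexp x).trans (hDexp y).symm) _ _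
  have hperiod : circleMap a R (2 * Real.pi) = circleMap a R 0 := (periodic_circleMap a R).eq
  have hloop : D (2 * Real.pi) = D 0 - 2 * Real.pi * I := by simp [D, hperiod]
  exact two_pi_I_ne_zero (sub_eq_self.1 (hloop.symm.trans hDconst.symm))

theorem exists_eq_zero_of_eqOn_sphere {h : ℂ → ℂ} (hh : Continuous h) {a : ℂ} {R : ℝ} (hR : 0 < R)
    (ha : EqOn h (fun x => x - a) (sphere a R)) : ∃ x, h x = 0 := by
  by_contra! h0
  exact not_hasLogOn_sphere a hR
    (((HasLogOn.univ_of_continuous hh h0).mono (subset_univ _)).congr ha)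

theorem mem_slitPlane_of_norm_sub_one_lt {z : ℂ} (h : ‖z - 1‖ < 1) : z ∈ slitPlane := by
  have hre := (abs_re_le_norm (z - 1)).trans_lt h
  rw [sub_re, one_re, abs_lt] at hre
  exact Or.inl (by linarith)

variable {K : Set ℂ} {a b : ℂ}

theorem hasLogOn_div_of_dist_lt (hab : ∀ x ∈ K, dist a b < dist x b) :
    HasLogOn K (fun x => (x - a) / (x - b)) := by
  have hne : ∀ x ∈ K, x - b ≠ 0 := fun x hx =>
    sub_ne_zero.2 (dist_pos.1 (dist_nonneg.trans_lt (hab x hx)))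
  refine HasLogOn.of_mapsTo_slitPlane (ContinuousOn.div (by fun_prop) (by fun_prop) hne)
    fun x hx => mem_slitPlane_of_norm_sub_one_lt ?_
  rw [div_sub_one (hne x hx), sub_sub_sub_cancel_left, norm_div,
    div_lt_one (norm_pos_iff.2 (hne x hx)), ← dist_eq_norm, ← dist_eq_norm, dist_comm]
  exact hab x hx

theorem hasLogOn_div_of_isPreconnected {S : Set ℂ} (hK : IsClosed K) (hS : IsPreconnected S)
    (hSK : S ⊆ Kᶜ) (ha : a ∈ S) (hb : b ∈ S) : HasLogOn K (fun x => (x - a) / (x - b)) := by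
  have hsymm : ∀ {a b : ℂ}, HasLogOn K (fun x => (x - a) / (x - b)) →
      HasLogOn K (fun x => (x - b) / (x - a)) := fun h => h.inv.congr fun x _ => inv_div _ _
  have hne : ∀ x ∈ K, ∀ y ∈ S, x - y ≠ 0 := fun x hx y hy h =>
    hSK hy (by rwa [← sub_eq_zero.1 h])
  refine hS.induction₂ (fun a b => HasLogOn K (fun x => (x - a) / (x - b))) (fun a ha => ?_)
    (fun a b c _ hb _ hab hbc => ?_) (fun a b _ _ => hsymm) ha hb
  · obtain ⟨ε, hε, hball⟩ := Metric.isOpen_iff.1 hK.isOpen_compl a (hSK ha)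
    filter_upwards [mem_nhdsWithin_of_mem_nhds (ball_mem_nhds a hε)] with b hb
    refine hsymm (hasLogOn_div_of_dist_lt fun x hx => (mem_ball.1 hb).trans_le ?_)
    by_contra! hxa
    exact hball hxa hx
  · refine (hab.mul hbc).congr fun x hx => ?_
    exact div_mul_div_cancel₀ (hne x hx b hb)

/-- By Tietze a logarithm `l` on `K` extends to the plane, so that gluing `exp l * (x - b)` on `U`
to `x - a` off `U` gives a nonvanishing continuous function. -/
theorem not_hasLogOn_div_of_frontier_subset {U : Set ℂ} (hK : IsClosed K) (hb : b ∉ K)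
    (hU : IsBounded U) (haU : a ∈ U) (hbU : b ∉ U) (hUK : frontier U ⊆ K) :
    ¬ HasLogOn K (fun x => (x - a) / (x - b)) := by
  rintro ⟨l, hl, hexp⟩
  obtain ⟨L, hL⟩ := ContinuousMap.exists_restrict_eq hK
    ⟨K.domRestrict l, continuousOn_iff_continuous_domRestrict.1 hl⟩
  have hLexp : ∀ x ∈ K, exp (L x) = (x - a) / (x - b) := fun x hx => by
    have hLx : L x = l x := DFunLike.congr_fun hL ⟨x, hx⟩
    rw [hLx]
    exact hexp hx
  classical
  let h : ℂ → ℂ := U.piecewise (fun x => exp (L x) * (x - b)) (fun x => x - a)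
  have hcont : Continuous h := by
    refine continuous_piecewise (fun x hx => ?_) (by fun_prop) (by fun_prop)
    have hxK := hUK hx
    rw [hLexp x hxK, div_mul_cancel₀ _ (sub_ne_zero.2 (ne_of_mem_of_not_mem hxK hb))]
  obtain ⟨R, hR, hUR⟩ : ∃ R > 0, ∀ x ∈ U, dist x a < R := by
    obtain ⟨R, hUR⟩ := hU.subset_ball a
    exact ⟨R, dist_nonneg.trans_lt (hUR haU), hUR⟩
  obtain ⟨x, hx⟩ : ∃ x, h x = 0 := exists_eq_zero_of_eqOn_sphere hcont hR fun x hx =>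
    piecewise_eq_of_notMem _ _ _ fun hxU => (hUR x hxU).ne (mem_sphere.1 hx)
  by_cases hxU : x ∈ U
  · rw [show h x = exp (L x) * (x - b) from piecewise_eq_of_mem _ _ _ hxU] at hx
    exact mul_ne_zero (exp_ne_zero _) (sub_ne_zero.2 (ne_of_mem_of_not_mem hxU hbU)) hx
  · rw [show h x = x - a from piecewise_eq_of_notMem _ _ _ hxU] at hx
    exact hxU (sub_eq_zero.1 hx ▸ haU)

theorem frontier_connectedComponentIn_subset_compl {X : Type*} [TopologicalSpace X]
    [LocallyConnectedSpace X] {U : Set X} (hU : IsOpen U) (x : X) :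
    frontier (connectedComponentIn U x) ⊆ Uᶜ := by
  intro y hy hyU
  rw [hU.connectedComponentIn.frontier_eq] at hy
  obtain ⟨w, hwy, hwx⟩ := mem_closure_iff.1 hy.1 _ hU.connectedComponentIn
    (mem_connectedComponentIn hyU)
  refine hy.2 ?_
  rw [connectedComponentIn_eq hwx, ← connectedComponentIn_eq hwy]
  exact mem_connectedComponentIn hyU

section NormedSpace

variable {E : Type*} [NormedAddCommGroup E] [NormedSpace ℝ E]

theorem isPreconnected_compl_closedBall (hE : 1 < Module.rank ℝ E) (p : E) (R : ℝ) :
    IsPreconnected (closedBall p R)ᶜ := by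
  rcases lt_or_ge R 0 with hR | hR
  · rw [closedBall_eq_empty.2 hR, compl_empty]
    exact convex_univ.isPreconnected
  have hpolar : (closedBall p R)ᶜ = (fun x : E × ℝ => p + x.2 • x.1) '' (sphere 0 1 ×ˢ Ioi R) := by
    ext z
    constructor
    · intro hz
      have hRz : R < ‖z - p‖ := by simpa [dist_eq_norm] using hz
      have hz0 : ‖z - p‖ ≠ 0 := (hR.trans_lt hRz).ne'
      exact ⟨(‖z - p‖⁻¹ • (z - p), ‖z - p‖),
        ⟨by simp [norm_smul, hz0], hRz⟩, by simp [smul_smul, hz0]⟩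
    · rintro ⟨⟨u, t⟩, ⟨hu, ht⟩, rfl⟩
      have hRt : R < t := ht
      simpa [norm_smul, mem_sphere_zero_iff_norm.1 hu] using hRt.trans_le (le_abs_self t)
  rw [hpolar]
  exact ((isPreconnected_sphere hE 0 1).prod isPreconnected_Ioi).image _ (by fun_prop)

theorem connectedComponentIn_compl_eq_of_not_isBounded (hE : 1 < Module.rank ℝ E) {K : Set E}
    (hK : IsBounded K) {x y : E} (hx : ¬ IsBounded (connectedComponentIn Kᶜ x))
    (hy : ¬ IsBounded (connectedComponentIn Kᶜ y)) :
    connectedComponentIn Kᶜ x = connectedComponentIn Kᶜ y := by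
  obtain ⟨R, hKR⟩ := hK.subset_closedBall 0
  have hfar : ∀ z, ¬ IsBounded (connectedComponentIn Kᶜ z) →
      ∃ w ∈ (closedBall (0 : E) R)ᶜ, w ∈ connectedComponentIn Kᶜ z := fun z hz =>
    (not_subset.1 fun hsub => hz (isBounded_closedBall.subset hsub)).imp fun _ hw => hw.symm
  obtain ⟨w, hw, hwx⟩ := hfar x hx
  obtain ⟨v, hv, hvy⟩ := hfar y hy
  rw [connectedComponentIn_eq hwx, connectedComponentIn_eq hvy]
  exact connectedComponentIn_eq
    ((isPreconnected_compl_closedBall hE 0 R).subset_connectedComponentIn hw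
      (compl_subset_compl.2 hKR) hv)

end NormedSpace

theorem one_lt_rank_real_complex : 1 < Module.rank ℝ ℂ := by
  rw [rank_real_complex]
  exact Nat.one_lt_ofNat

theorem mem_connectedComponentIn_compl_of_hasLogOn (hK : IsCompact K) (ha : a ∉ K) (hb : b ∉ K)
    (hlog : HasLogOn K (fun x => (x - a) / (x - b))) : b ∈ connectedComponentIn Kᶜ a := by
  by_contra hab
  have hba : a ∉ connectedComponentIn Kᶜ b := fun h =>
    hab (connectedComponentIn_eq h ▸ mem_connectedComponentIn hb)
  have hfrontier : ∀ x, frontier (connectedComponentIn Kᶜ x) ⊆ K := fun x => by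
    simpa using frontier_connectedComponentIn_subset_compl hK.isClosed.isOpen_compl x
  have hlog' : HasLogOn K (fun x => (x - b) / (x - a)) := hlog.inv.congr fun x _ => inv_div _ _
  by_cases hboundedA : IsBounded (connectedComponentIn Kᶜ a)
  · exact not_hasLogOn_div_of_frontier_subset hK.isClosed hb hboundedA
      (mem_connectedComponentIn ha) hab (hfrontier a) hlog
  by_cases hboundedB : IsBounded (connectedComponentIn Kᶜ b)
  · exact not_hasLogOn_div_of_frontier_subset hK.isClosed ha hboundedB
      (mem_connectedComponentIn hb) hba (hfrontier b) hlog'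
  · exact hab (connectedComponentIn_compl_eq_of_not_isBounded one_lt_rank_real_complex hK.isBounded
      hboundedA hboundedB ▸ mem_connectedComponentIn hb)

end Separation

/-! ### Length of arcs -/

section HausdorffMeasure

variable {X : Type*} [MetricSpace X] [MeasurableSpace X] [BorelSpace X] {J : Set X} {x y : X}

theorem ofReal_le_hausdorffMeasure_inter_closedBall (hJ : IsPreconnected J) (hx : x ∈ J)
    (hy : y ∈ J) {r : ℝ} (hr : r ≤ dist y x) :
    ENNReal.ofReal r ≤ μH[1] (J ∩ closedBall x r) := by
  have hIcc : Icc 0 r ⊆ (fun z => dist z x) '' (J ∩ closedBall x r) := fun t ht => by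
    obtain ⟨z, hz, rfl⟩ : t ∈ (fun z => dist z x) '' J :=
      hJ.intermediate_value hx hy (f := fun z => dist z x) (by fun_prop)
        ⟨by simpa using ht.1, ht.2.trans hr⟩
    exact ⟨z, ⟨hz, ht.2⟩, rfl⟩
  have hlip : LipschitzOnWith 1 (fun z => dist z x) (J ∩ closedBall x r) :=
    (LipschitzWith.dist_left x).lipschitzOnWith
  calc ENNReal.ofReal r = μH[1] (Icc 0 r) := by simp [hausdorffMeasure_real]
    _ ≤ μH[1] ((fun z => dist z x) '' (J ∩ closedBall x r)) := measure_mono hIcc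
    _ ≤ μH[1] (J ∩ closedBall x r) := by
      simpa using hlip.hausdorffMeasure_image_le zero_le_one

theorem ofReal_dist_le_hausdorffMeasure (hJ : IsPreconnected J) (hx : x ∈ J) (hy : y ∈ J) :
    ENNReal.ofReal (dist y x) ≤ μH[1] J :=
  (ofReal_le_hausdorffMeasure_inter_closedBall hJ hx hy le_rfl).trans
    (measure_mono inter_subset_left)

end HausdorffMeasure

namespace IsQuasismooth

variable {Γ : Set ℂ} {Λ : ℝ} {x y : ℂ}

/-- The infimum defining `shorterArcLength` need not be attained, hence `Λ + 1` in place of `Λ`. -/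
theorem exists_subarc (h : IsQuasismooth Γ Λ) (hx : x ∈ Γ) (hy : y ∈ Γ) :
    ∃ J ⊆ Γ, IsPreconnected J ∧ x ∈ J ∧ y ∈ J ∧
      μH[1] J ≤ ENNReal.ofReal ((Λ + 1) * dist y x) := by
  have hΛ := h.1
  rcases eq_or_ne x y with rfl | hxy
  · have := Measure.nullSingletonClass_hausdorff ℂ one_pos
    exact ⟨{x}, by simpa using hx, isPreconnected_singleton, rfl, rfl, by simp⟩
  have hdist := dist_pos.2 hxy
  have hlt : shorterArcLength Γ x y < ENNReal.ofReal ((Λ + 1) * dist y x) := by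
    refine (h.2 x hx y hy).trans_lt ?_
    rw [dist_comm y, ENNReal.ofReal_lt_ofReal_iff (by positivity)]
    nlinarith
  simp only [shorterArcLength, iInf_lt_iff] at hlt
  obtain ⟨J, ⟨⟨hJΓ, -, hJ⟩, hxJ, hyJ⟩, hlength⟩ := hlt
  exact ⟨J, hJΓ, hJ, hxJ, hyJ, hlength.le⟩

theorem exists_subarc_subset_closedBall (h : IsQuasismooth Γ Λ) (hx : x ∈ Γ) (hy : y ∈ Γ) :
    ∃ J ⊆ Γ, IsPreconnected J ∧ x ∈ J ∧ y ∈ J ∧ J ⊆ closedBall x ((Λ + 1) * dist y x) := by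
  have hΛ := h.1
  obtain ⟨J, hJΓ, hJ, hxJ, hyJ, hlength⟩ := h.exists_subarc hx hy
  refine ⟨J, hJΓ, hJ, hxJ, hyJ, fun z hz => ?_⟩
  exact (ENNReal.ofReal_le_ofReal_iff (by positivity)).1
    ((ofReal_dist_le_hausdorffMeasure hJ hxJ hz).trans hlength)

end IsQuasismooth

/-- A `2π`-periodic continuous parametrization of `Γ`, injective on half-open periods: the form in
which the Jordan curve hypothesis is used, subarcs being images of intervals. -/
structure IsJordanParam (Γ : Set ℂ) (γ : ℝ → ℂ) : Prop where
  continuous : Continuous γ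
  periodic : Function.Periodic γ (2 * Real.pi)
  injOn_Ico : ∀ s, InjOn γ (Ico s (s + 2 * Real.pi))
  range_eq : range γ = Γ

theorem IsJordanCurve.isCompact {Γ : Set ℂ} (h : IsJordanCurve Γ) : IsCompact Γ := by
  obtain ⟨γ, hγ, -, rfl⟩ := h
  exact (isCompact_sphere 0 1).image_of_continuousOn hγ

theorem IsJordanCurve.isPreconnected {Γ : Set ℂ} (h : IsJordanCurve Γ) : IsPreconnected Γ := by
  obtain ⟨γ, hγ, -, rfl⟩ := h
  exact (isPreconnected_sphere one_lt_rank_real_complex 0 1).image γ hγ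

theorem IsJordanCurve.exists_isJordanParam {Γ : Set ℂ} (h : IsJordanCurve Γ) :
    ∃ γ, IsJordanParam Γ γ := by
  obtain ⟨g, hg, hinj, rfl⟩ := h
  have hexp : ∀ t : ℝ, (Circle.exp t : ℂ) ∈ sphere (0 : ℂ) 1 := fun t => by simp
  refine ⟨fun t => g (Circle.exp t), hg.comp_continuous (by fun_prop) hexp,
    fun t => congrArg (fun z : Circle => g z) (Circle.periodic_exp t),
    fun s x hx y hy hxy => ?_, ?_⟩
  · exact Circle.exp_injOn_Ico (by simp) hx hy (Circle.ext (hinj (hexp x) (hexp y) hxy))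
  · refine Subset.antisymm (range_subset_iff.2 fun t => mem_image_of_mem _ (hexp t)) ?_
    rintro _ ⟨w, hw, rfl⟩
    obtain ⟨t, ht⟩ := Circle.exp_surjective ⟨w, hw⟩
    exact ⟨t, congrArg g (congrArg Subtype.val ht)⟩

namespace IsJordanParam

variable {Γ : Set ℂ} {γ : ℝ → ℂ} {s t : ℝ}

theorem mem (h : IsJordanParam Γ γ) (t : ℝ) : γ t ∈ Γ := h.range_eq ▸ mem_range_self t

theorem exists_mem_Ico (h : IsJordanParam Γ γ) (s : ℝ) {z : ℂ} (hz : z ∈ Γ) :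
    ∃ t ∈ Ico s (s + 2 * Real.pi), γ t = z := by
  rw [← h.range_eq] at hz
  obtain ⟨t, rfl⟩ := hz
  obtain ⟨u, hu, htu⟩ := h.periodic.exists_mem_Ico Real.two_pi_pos t s
  exact ⟨u, hu, htu.symm⟩

theorem image_Icc (h : IsJordanParam Γ γ) (s : ℝ) : γ '' Icc s (s + 2 * Real.pi) = Γ :=
  (h.periodic.image_Icc Real.two_pi_pos s).trans h.range_eq

theorem isCompact_image_Icc (h : IsJordanParam Γ γ) (s t : ℝ) : IsCompact (γ '' Icc s t) :=
  isCompact_Icc.image h.continuous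

theorem hasLogOn_image_Icc (h : IsJordanParam Γ γ) (hst : s ≤ t) (hts : t < s + 2 * Real.pi)
    {g : ℂ → ℂ} (hg : ContinuousOn g (γ '' Icc s t)) (h0 : ∀ z ∈ γ '' Icc s t, g z ≠ 0) :
    HasLogOn (γ '' Icc s t) g :=
  _root_.hasLogOn_image_Icc hst h.continuous.continuousOn
    ((h.injOn_Ico s).mono (Icc_subset_Ico_right hts)) hg h0

theorem mem_or_mem_of_inter_nonempty (h : IsJordanParam Γ γ) (hst : s ≤ t)
    (hts : t < s + 2 * Real.pi) {J : Set ℂ} (hJ : IsPreconnected J) (hJΓ : J ⊆ Γ)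
    (hJst : (J ∩ γ '' Icc s t).Nonempty) (hJts : (J ∩ γ '' Icc t (s + 2 * Real.pi)).Nonempty) :
    γ s ∈ J ∨ γ t ∈ J := by
  have hcover : J ⊆ γ '' Icc s t ∪ γ '' Icc t (s + 2 * Real.pi) := by
    rwa [← image_union, Icc_union_Icc_eq_Icc hst hts.le, h.image_Icc]
  obtain ⟨_, hz, ⟨u, hu, rfl⟩, v, hv, hvu⟩ := isPreconnected_closed_iff.1 hJ _ _
    (h.isCompact_image_Icc s t).isClosed (h.isCompact_image_Icc t _).isClosed hcover hJst hJts
  rcases hv.2.eq_or_lt with rfl | hvlt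
  · exact Or.inl (by rwa [← hvu, h.periodic] at hz)
  · have huv : u = v := h.injOn_Ico s ⟨hu.1, hu.2.trans_lt hts⟩ ⟨hst.trans hv.1, hvlt⟩ hvu.symm
    exact Or.inr (le_antisymm hu.2 (huv ▸ hv.1) ▸ hz)

theorem image_Icc_subset_or_image_Icc_subset (h : IsJordanParam Γ γ) {J : Set ℂ}
    (hJ : IsPreconnected J) (hJΓ : J ⊆ Γ) (hs : γ s ∈ J) (ht : γ t ∈ J) :
    γ '' Icc s t ⊆ J ∨ γ '' Icc t (s + 2 * Real.pi) ⊆ J := by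
  by_contra! hcon
  obtain ⟨_, ⟨v, hv, rfl⟩, hvJ⟩ := not_subset.1 hcon.1
  obtain ⟨_, ⟨w, hw, rfl⟩, hwJ⟩ := not_subset.1 hcon.2
  have hsv : s < v := hv.1.lt_of_ne fun hsv => hvJ (hsv ▸ hs)
  have hws : w < s + 2 * Real.pi := hw.2.lt_of_ne fun hws => hwJ (by rwa [hws, h.periodic])
  rcases h.mem_or_mem_of_inter_nonempty (hv.2.trans hw.1) (by linarith) hJ hJΓ
    ⟨_, ht, t, ⟨hv.2, hw.1⟩, rfl⟩
    ⟨_, hs, s + 2 * Real.pi, ⟨hws.le, by linarith⟩, h.periodic s⟩ with hmem | hmem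
  · exact hvJ hmem
  · exact hwJ hmem

end IsJordanParam

theorem measure_image_setOf_measure_image_Icc_le {α Y : Type*} [ConditionallyCompleteLinearOrder α]
    [TopologicalSpace α] [OrderTopology α] [FirstCountableTopology α] [MeasurableSpace Y]
    (μ : Measure Y) [NullSingletonClass μ] (γ : α → Y) (s b : α) (c : ℝ≥0∞) :
    μ (γ '' {t ∈ Icc s b | μ (γ '' Icc s t) ≤ c}) ≤ c := by
  set P : Set α := {t ∈ Icc s b | μ (γ '' Icc s t) ≤ c}
  rcases P.eq_empty_or_nonempty with hP | hP
  · simp [hP]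
  have hbdd : BddAbove P := ⟨b, fun t ht => ht.1.2⟩
  obtain ⟨u, hmono, hlim, hu⟩ := exists_seq_tendsto_sSup hP hbdd
  have hcover : γ '' P ⊆ (⋃ n, γ '' Icc s (u n)) ∪ {γ (sSup P)} := by
    rintro _ ⟨t, ht, rfl⟩
    rcases (le_csSup hbdd ht).eq_or_lt with rfl | hlt
    · exact Or.inr rfl
    · obtain ⟨n, hn⟩ := (hlim.eventually (lt_mem_nhds hlt)).exists
      exact Or.inl (mem_iUnion.2 ⟨n, t, ⟨ht.1.1, hn.le⟩, rfl⟩)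
  calc μ (γ '' P) ≤ μ (⋃ n, γ '' Icc s (u n)) + μ {γ (sSup P)} :=
        (measure_mono hcover).trans (measure_union_le _ _)
    _ = ⨆ n, μ (γ '' Icc s (u n)) := by
        rw [measure_singleton, add_zero, Monotone.measure_iUnion]
        exact fun m n hmn => image_mono (Icc_subset_Icc_right (hmono hmn))
    _ ≤ c := iSup_le fun n => (hu n).2

/-- A point of the ball is joined to the centre by an arc of length at most `(Λ + 1) * R`, which
runs along `Γ` either forwards or backwards from the centre. -/
theorem IsQuasismooth.hausdorffMeasure_inter_closedBall_le {Γ : Set ℂ} {Λ : ℝ}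
    (h : IsQuasismooth Γ Λ) (hΓ : IsJordanCurve Γ) {ζ : ℂ} (hζ : ζ ∈ Γ) (R : ℝ) :
    μH[1] (Γ ∩ closedBall ζ R) ≤ 2 * ENNReal.ofReal ((Λ + 1) * R) := by
  obtain ⟨γ, hγ⟩ := hΓ.exists_isJordanParam
  obtain ⟨s, -, rfl⟩ := hγ.exists_mem_Ico 0 hζ
  have hΛ := h.1
  set c := ENNReal.ofReal ((Λ + 1) * R)
  have hcover : Γ ∩ closedBall (γ s) R ⊆
      γ '' {t ∈ Icc s (s + 2 * Real.pi) | μH[1] (γ '' Icc s t) ≤ c} ∪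
      (fun t => γ (-t)) '' {t ∈ Icc (-(s + 2 * Real.pi)) (-s) |
        μH[1] ((fun t => γ (-t)) '' Icc (-(s + 2 * Real.pi)) t) ≤ c} := by
    rintro z ⟨hz, hzR⟩
    obtain ⟨t, ht, rfl⟩ := hγ.exists_mem_Ico s hz
    obtain ⟨J, hJΓ, hJ, hsJ, htJ, hlength⟩ := h.exists_subarc (hγ.mem s) (hγ.mem t)
    have hJc : μH[1] J ≤ c := hlength.trans (ENNReal.ofReal_le_ofReal
      (mul_le_mul_of_nonneg_left hzR (by linarith)))
    rcases hγ.image_Icc_subset_or_image_Icc_subset hJ hJΓ hsJ htJ with hsub | hsub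
    · exact Or.inl ⟨t, ⟨Ico_subset_Icc_self ht, (measure_mono hsub).trans hJc⟩, rfl⟩
    · refine Or.inr ⟨-t, ⟨⟨by linarith [ht.2], by linarith [ht.1]⟩,
        (measure_mono ?_).trans hJc⟩, by simp⟩
      rintro _ ⟨v, hv, rfl⟩
      exact hsub ⟨-v, ⟨by linarith [hv.2], by linarith [hv.1]⟩, rfl⟩
  have := Measure.nullSingletonClass_hausdorff ℂ one_pos
  refine (measure_mono hcover).trans ((measure_union_le _ _).trans ?_)
  rw [two_mul c]
  exact add_le_add (measure_image_setOf_measure_image_Icc_le _ _ _ _ _)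
    (measure_image_setOf_measure_image_Icc_le _ _ _ _ _)

/-! ### The unbounded component -/

section UnboundedComponent

variable {Γ : Set ℂ} {a b : ℂ}

theorem unboundedComponent_subset_compl : unboundedComponent Γ ⊆ Γᶜ := fun _ h => h.1

theorem unboundedComponent_eq_connectedComponentIn (hΓ : IsBounded Γ)
    (ha : a ∈ unboundedComponent Γ) : unboundedComponent Γ = connectedComponentIn Γᶜ a := by
  refine Subset.antisymm (fun b hb => ?_) fun b hb => ⟨connectedComponentIn_subset _ _ hb, ?_⟩
  · rw [connectedComponentIn_compl_eq_of_not_isBounded one_lt_rank_real_complex hΓ ha.2 hb.2]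
    exact mem_connectedComponentIn hb.1
  · rw [← connectedComponentIn_eq hb]
    exact ha.2

theorem subset_unboundedComponent (hΓ : IsBounded Γ) (ha : a ∈ unboundedComponent Γ)
    {F : Set ℂ} (hF : IsPreconnected F) (haF : a ∈ F) (hFΓ : F ⊆ Γᶜ) :
    F ⊆ unboundedComponent Γ := by
  rw [unboundedComponent_eq_connectedComponentIn hΓ ha]
  exact hF.subset_connectedComponentIn haF hFΓ

theorem unboundedComponent_mem_cobounded (hΓ : IsBounded Γ) :
    unboundedComponent Γ ∈ cobounded ℂ := by
  obtain ⟨R, hR⟩ := hΓ.subset_closedBall 0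
  filter_upwards [isBounded_def.1 (isBounded_closedBall (x := (0 : ℂ)) (r := R))] with z hz
  refine ⟨fun hzΓ => hz (hR hzΓ), fun hbdd => ?_⟩
  have hexterior : (closedBall (0 : ℂ) R)ᶜ ⊆ connectedComponentIn Γᶜ z :=
    (isPreconnected_compl_closedBall one_lt_rank_real_complex 0 R).subset_connectedComponentIn hz
      (compl_subset_compl.2 hR)
  refine NormedSpace.unbounded_univ ℝ ℂ ?_
  rw [← union_compl_self (closedBall (0 : ℂ) R)]
  exact isBounded_closedBall.union (hbdd.subset hexterior)

theorem unboundedComponent_nonempty (hΓ : IsBounded Γ) : (unboundedComponent Γ).Nonempty :=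
  (cobounded ℂ).nonempty_of_mem (unboundedComponent_mem_cobounded hΓ)

theorem isPreconnected_unboundedComponent (hΓ : IsBounded Γ) :
    IsPreconnected (unboundedComponent Γ) := by
  obtain ⟨a, ha⟩ := unboundedComponent_nonempty hΓ
  rw [unboundedComponent_eq_connectedComponentIn hΓ ha]
  exact isPreconnected_connectedComponentIn

theorem isOpen_unboundedComponent (hΓ : IsCompact Γ) : IsOpen (unboundedComponent Γ) := by
  obtain ⟨a, ha⟩ := unboundedComponent_nonempty hΓ.isBounded
  rw [unboundedComponent_eq_connectedComponentIn hΓ.isBounded ha]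
  exact hΓ.isClosed.isOpen_compl.connectedComponentIn

theorem frontier_unboundedComponent_subset (hΓ : IsCompact Γ) :
    frontier (unboundedComponent Γ) ⊆ Γ := by
  obtain ⟨a, ha⟩ := unboundedComponent_nonempty hΓ.isBounded
  rw [unboundedComponent_eq_connectedComponentIn hΓ.isBounded ha]
  simpa using frontier_connectedComponentIn_subset_compl hΓ.isClosed.isOpen_compl a

theorem hasLogOn_div_of_mem_unboundedComponent (hΓ : IsCompact Γ)
    (ha : a ∈ unboundedComponent Γ) (hb : b ∈ unboundedComponent Γ) :
    HasLogOn Γ (fun x => (x - a) / (x - b)) :=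
  hasLogOn_div_of_isPreconnected hΓ.isClosed (isPreconnected_unboundedComponent hΓ.isBounded)
    unboundedComponent_subset_compl ha hb

theorem continuousOn_sub_div_sub {K : Set ℂ} (hb : b ∉ K) :
    ContinuousOn (fun x => (x - a) / (x - b)) K :=
  ContinuousOn.div (by fun_prop) (by fun_prop) fun _ hx =>
    sub_ne_zero.2 (ne_of_mem_of_not_mem hx hb)

theorem sub_div_sub_ne_zero {x : ℂ} {K : Set ℂ} (hx : x ∈ K) (ha : a ∉ K) (hb : b ∉ K) :
    (x - a) / (x - b) ≠ 0 :=
  div_ne_zero (sub_ne_zero.2 (ne_of_mem_of_not_mem hx ha))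
    (sub_ne_zero.2 (ne_of_mem_of_not_mem hx hb))

theorem IsJordanCurve.exists_isCompact_hasLogOn (hΓ : IsJordanCurve Γ) {z : ℂ} (hz : z ∈ Γ)
    {V : Set ℂ} (hV : V ∈ 𝓝 z) :
    ∃ A ⊆ Γ, IsCompact A ∧ z ∉ A ∧ Γ \ V ⊆ A ∧
      ∀ g : ℂ → ℂ, ContinuousOn g A → (∀ x ∈ A, g x ≠ 0) → HasLogOn A g := by
  obtain ⟨γ, hγ⟩ := hΓ.exists_isJordanParam
  obtain ⟨s, -, rfl⟩ := hγ.exists_mem_Ico 0 hz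
  have hpi := Real.pi_pos
  obtain ⟨ε, hε, hεV⟩ := Metric.eventually_nhds_iff_ball.1 (hγ.continuous.continuousAt hV)
  obtain ⟨η, hη, hηε⟩ := exists_between (lt_min hε hpi)
  rw [lt_min_iff] at hηε
  refine ⟨γ '' Icc (s + η) (s + 2 * Real.pi - η), ?_, hγ.isCompact_image_Icc _ _, ?_, ?_,
    fun g => hγ.hasLogOn_image_Icc (by linarith) (by linarith)⟩
  · rintro _ ⟨t, -, rfl⟩
    exact hγ.mem t
  · rintro ⟨t, ht, hts⟩
    have := hγ.injOn_Ico s ⟨by linarith [ht.1], by linarith [ht.2]⟩ ⟨le_rfl, by linarith⟩ hts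
    linarith [ht.1]
  · rintro _ ⟨hw, hwV⟩
    obtain ⟨t, ht, rfl⟩ := hγ.exists_mem_Ico s hw
    refine ⟨t, ⟨?_, ?_⟩, rfl⟩ <;> by_contra! hlt
    · exact hwV (hεV t (by rw [mem_ball, Real.dist_eq, abs_of_nonneg] <;> linarith [ht.1]))
    · refine hwV (hγ.periodic.sub_eq t ▸ hεV (t - 2 * Real.pi) ?_)
      rw [mem_ball, Real.dist_eq, abs_of_neg] <;> linarith [ht.2]

/-- If `z` were off the closure of the unbounded component, removing a small arc around `z` from
`Γ` would leave an arc, which does not separate the plane, with the same unbounded component. -/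
theorem IsJordanCurve.subset_closure_unboundedComponent (hΓ : IsJordanCurve Γ) :
    Γ ⊆ closure (unboundedComponent Γ) := by
  intro z hz
  by_contra hcl
  obtain ⟨A, hAΓ, hA, hzA, hΓA, hlog⟩ :=
    hΓ.exists_isCompact_hasLogOn hz (isClosed_closure.isOpen_compl.mem_nhds hcl)
  obtain ⟨a, ha⟩ := unboundedComponent_nonempty hΓ.isCompact.isBounded
  have haA : a ∉ A := fun haA => ha.1 (hAΓ haA)
  have hzcomp : z ∈ connectedComponentIn Aᶜ a :=
    mem_connectedComponentIn_compl_of_hasLogOn hA haA hzA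
      (hlog _ (continuousOn_sub_div_sub hzA) fun x hx => sub_div_sub_ne_zero hx haA hzA)
  have hcomp : connectedComponentIn Aᶜ a ⊆ unboundedComponent Γ := by
    refine isPreconnected_connectedComponentIn.subset_of_closure_inter_subset
      (isOpen_unboundedComponent hΓ.isCompact) ⟨a, mem_connectedComponentIn haA, ha⟩ ?_
    rintro x ⟨hxcl, hx⟩
    by_contra hxΩ
    have hxΓ : x ∈ Γ := frontier_unboundedComponent_subset hΓ.isCompact
      ⟨hxcl, fun hint => hxΩ (interior_subset hint)⟩
    exact connectedComponentIn_subset _ _ hx (hΓA ⟨hxΓ, fun hxV => hxV hxcl⟩)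
  exact (hcomp hzcomp).1 hz

/-! ### Linear local connectivity of the exterior domain -/

/-- Linear local connectivity in the sense of Gehring: points of `U` in a ball can be joined in `U`
inside the `κ` times larger ball, and points of `U` outside the `κ` times larger ball can be joined
in `U` outside the ball. -/
structure IsLinearlyLocallyConnected {X : Type*} [PseudoMetricSpace X] (U : Set X) (κ : ℝ) :
    Prop where
  exists_subset_ball : ∀ ⦃p a b : X⦄ ⦃R : ℝ⦄, 0 < R → a ∈ U → b ∈ U → dist a p < R →
    dist b p < R → ∃ F ⊆ U, IsPreconnected F ∧ a ∈ F ∧ b ∈ F ∧ ∀ z ∈ F, dist z p < κ * R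
  exists_disjoint_closedBall : ∀ ⦃p a b : X⦄ ⦃R : ℝ⦄, 0 < R → a ∈ U → b ∈ U →
    κ * R < dist a p → κ * R < dist b p →
      ∃ F ⊆ U, IsPreconnected F ∧ a ∈ F ∧ b ∈ F ∧ ∀ z ∈ F, R < dist z p

theorem exists_isPreconnected_subset_unboundedComponent_diff {L : Set ℂ} (hΓ : IsCompact Γ)
    (hL : IsCompact L) (ha : a ∈ unboundedComponent Γ) (hb : b ∈ unboundedComponent Γ)
    (haL : a ∉ L) (hbL : b ∉ L) (hlog : HasLogOn (Γ ∪ L) (fun x => (x - a) / (x - b))) :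
    ∃ F ⊆ unboundedComponent Γ \ L, IsPreconnected F ∧ a ∈ F ∧ b ∈ F := by
  have haΓL : a ∉ Γ ∪ L := fun h => h.elim ha.1 haL
  have hbΓL : b ∉ Γ ∪ L := fun h => h.elim hb.1 hbL
  have hF := connectedComponentIn_subset (Γ ∪ L)ᶜ a
  have haF := mem_connectedComponentIn (F := (Γ ∪ L)ᶜ) haΓL
  refine ⟨_, subset_sdiff.2 ⟨?_, ?_⟩, isPreconnected_connectedComponentIn, haF,
    mem_connectedComponentIn_compl_of_hasLogOn (hΓ.union hL) haΓL hbΓL hlog⟩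
  · exact subset_unboundedComponent hΓ.isBounded ha isPreconnected_connectedComponentIn haF
      fun z hz hzΓ => hF hz (Or.inl hzΓ)
  · exact disjoint_left.2 fun z hz hzL => hF hz (Or.inr hzL)

namespace IsQuasismooth

variable {Λ R : ℝ} {p x y : ℂ}

theorem exists_subarc_dist_le (h : IsQuasismooth Γ Λ) (hx : x ∈ Γ) (hy : y ∈ Γ)
    (hxp : dist x p ≤ R) (hyp : dist y p ≤ R) :
    ∃ J ⊆ Γ, IsPreconnected J ∧ x ∈ J ∧ y ∈ J ∧ ∀ z ∈ J, dist z p ≤ (3 + 2 * Λ) * R := by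
  have hΛ := h.1
  obtain ⟨J, hJΓ, hJ, hxJ, hyJ, hJball⟩ := h.exists_subarc_subset_closedBall hx hy
  refine ⟨J, hJΓ, hJ, hxJ, hyJ, fun z hz => ?_⟩
  have hyx : dist y x ≤ R + R := (dist_triangle_right y x p).trans (add_le_add hyp hxp)
  calc dist z p ≤ dist z x + dist x p := dist_triangle z x p
    _ ≤ (Λ + 1) * (R + R) + R :=
      add_le_add ((hJball hz).trans (mul_le_mul_of_nonneg_left hyx (by linarith))) hxp
    _ = (3 + 2 * Λ) * R := by ring

theorem exists_subarc_le_dist (h : IsQuasismooth Γ Λ) (hΓ : IsJordanCurve Γ) (hx : x ∈ Γ)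
    (hy : y ∈ Γ) (hxp : (3 + 2 * Λ) * R ≤ dist x p) (hyp : (3 + 2 * Λ) * R ≤ dist y p) :
    ∃ J ⊆ Γ, IsPreconnected J ∧ x ∈ J ∧ y ∈ J ∧ ∀ z ∈ J, R ≤ dist z p := by
  have hΛ := h.1
  obtain ⟨γ, hγ⟩ := hΓ.exists_isJordanParam
  obtain ⟨s, -, rfl⟩ := hγ.exists_mem_Ico 0 hx
  obtain ⟨t, ht, rfl⟩ := hγ.exists_mem_Ico s hy
  have harcΓ : ∀ s t, γ '' Icc s t ⊆ Γ := fun s t => image_subset_iff.2 fun u _ => hγ.mem u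
  have harc : ∀ s t, IsPreconnected (γ '' Icc s t) := fun s t =>
    isPreconnected_Icc.image _ hγ.continuous.continuousOn
  by_cases hfst : ∀ z ∈ γ '' Icc s t, R ≤ dist z p
  · exact ⟨_, harcΓ s t, harc s t, ⟨s, ⟨le_rfl, ht.1⟩, rfl⟩, ⟨t, ⟨ht.1, le_rfl⟩, rfl⟩, hfst⟩
  by_cases hsnd : ∀ z ∈ γ '' Icc t (s + 2 * Real.pi), R ≤ dist z p
  · exact ⟨_, harcΓ t _, harc t _, ⟨_, ⟨ht.2.le, le_rfl⟩, hγ.periodic s⟩,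
      ⟨t, ⟨le_rfl, ht.2.le⟩, rfl⟩, hsnd⟩
  push Not at hfst hsnd
  obtain ⟨u, hu, hup⟩ := hfst
  obtain ⟨v, hv, hvp⟩ := hsnd
  obtain ⟨J, hJΓ, hJ, huJ, hvJ, hJp⟩ := h.exists_subarc_dist_le (harcΓ _ _ hu) (harcΓ _ _ hv)
    (le_max_left (dist u p) (dist v p)) (le_max_right _ _)
  have hlt : (3 + 2 * Λ) * max (dist u p) (dist v p) < (3 + 2 * Λ) * R :=
    mul_lt_mul_of_pos_left (max_lt hup hvp) (by linarith)
  rcases hγ.mem_or_mem_of_inter_nonempty ht.1 ht.2 hJ hJΓ ⟨u, huJ, hu⟩ ⟨v, hvJ, hv⟩ with hJs | hJt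
  · exact absurd (hJp _ hJs) (by linarith)
  · exact absurd (hJp _ hJt) (by linarith)

theorem exists_unboundedComponent_dist_lt (h : IsQuasismooth Γ Λ) (hΓ : IsJordanCurve Γ)
    (hR : 0 < R) (ha : a ∈ unboundedComponent Γ) (hb : b ∈ unboundedComponent Γ)
    (hap : dist a p < R) (hbp : dist b p < R) :
    ∃ F ⊆ unboundedComponent Γ, IsPreconnected F ∧ a ∈ F ∧ b ∈ F ∧
      ∀ z ∈ F, dist z p < (3 + 2 * Λ) * R := by
  have hΛ := h.1
  have hRκ : R < (3 + 2 * Λ) * R := by nlinarith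
  have hlog : HasLogOn (Γ ∪ sphere p ((3 + 2 * Λ) * R)) (fun x => (x - a) / (x - b)) := by
    refine HasLogOn.union hΓ.isCompact.isClosed isClosed_sphere (fun z hz => ?_)
      (hasLogOn_div_of_mem_unboundedComponent hΓ.isCompact ha hb)
      (hasLogOn_div_of_isPreconnected isOpen_ball.isClosed_compl (convex_ball p R).isPreconnected
        (compl_compl _).ge hap hbp) fun x hx y hy => ?_
    · simpa [mem_sphere.1 hz] using hRκ.le
    · obtain ⟨J, hJΓ, hJ, hxJ, hyJ, hJp⟩ :=
        h.exists_subarc_le_dist hΓ hx.1 hy.1 (mem_sphere.1 hx.2).ge (mem_sphere.1 hy.2).ge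
      exact ⟨J, fun z hz => ⟨hJΓ hz, not_lt.2 (hJp z hz)⟩, hJ, hxJ, hyJ⟩
  obtain ⟨F, hFsub, hF, haF, hbF⟩ := exists_isPreconnected_subset_unboundedComponent_diff
    hΓ.isCompact (isCompact_sphere p _) ha hb (fun h => (hap.trans hRκ).ne h)
    (fun h => (hbp.trans hRκ).ne h) hlog
  refine ⟨F, fun z hz => (hFsub hz).1, hF, haF, hbF, fun z hz => ?_⟩
  by_contra! hzp
  obtain ⟨w, hw, hwp⟩ := hF.intermediate_value haF hz (f := fun z => dist z p) (by fun_prop)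
    ⟨(hap.trans hRκ).le, hzp⟩
  exact (hFsub hw).2 hwp

theorem exists_unboundedComponent_lt_dist (h : IsQuasismooth Γ Λ) (hΓ : IsCompact Γ)
    (hR : 0 < R) (ha : a ∈ unboundedComponent Γ) (hb : b ∈ unboundedComponent Γ)
    (hap : (3 + 2 * Λ) * R < dist a p) (hbp : (3 + 2 * Λ) * R < dist b p) :
    ∃ F ⊆ unboundedComponent Γ, IsPreconnected F ∧ a ∈ F ∧ b ∈ F ∧ ∀ z ∈ F, R < dist z p := by
  have hΛ := h.1
  have hRκ : R ≤ (3 + 2 * Λ) * R := by nlinarith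
  have hlog : HasLogOn (Γ ∪ closedBall p R) (fun x => (x - a) / (x - b)) := by
    refine HasLogOn.union hΓ.isClosed isClosed_closedBall (closedBall_subset_closedBall hRκ)
      (hasLogOn_div_of_mem_unboundedComponent hΓ ha hb)
      (hasLogOn_div_of_isPreconnected isClosed_closedBall
        (isPreconnected_compl_closedBall one_lt_rank_real_complex p _) le_rfl
        (not_le.2 hap) (not_le.2 hbp)) fun x hx y hy => ?_
    obtain ⟨J, hJΓ, hJ, hxJ, hyJ, hJp⟩ := h.exists_subarc_dist_le hx.1 hy.1 hx.2 hy.2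
    exact ⟨J, fun z hz => ⟨hJΓ hz, hJp z hz⟩, hJ, hxJ, hyJ⟩
  obtain ⟨F, hFsub, hF, haF, hbF⟩ := exists_isPreconnected_subset_unboundedComponent_diff
    hΓ (isCompact_closedBall p R) ha hb (not_le.2 (hRκ.trans_lt hap))
    (not_le.2 (hRκ.trans_lt hbp)) hlog
  exact ⟨F, fun z hz => (hFsub hz).1, hF, haF, hbF, fun z hz => not_le.1 (hFsub hz).2⟩

theorem isLinearlyLocallyConnected_unboundedComponent (h : IsQuasismooth Γ Λ)
    (hΓ : IsJordanCurve Γ) :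
    IsLinearlyLocallyConnected (unboundedComponent Γ) (3 + 2 * Λ) where
  exists_subset_ball _ _ _ _ := h.exists_unboundedComponent_dist_lt hΓ
  exists_disjoint_closedBall _ _ _ _ :=
    h.exists_unboundedComponent_lt_dist hΓ.isCompact

end IsQuasismooth

end UnboundedComponent

/-! ### Injective holomorphic maps -/

section Univalent

variable {f : ℂ → ℂ} {U : Set ℂ} {z : ℂ}

theorem nhds_le_map_nhds_of_injOn (hU : IsOpen U) (hf : DifferentiableOn ℂ f U) (hi : InjOn f U)
    (hz : z ∈ U) : 𝓝 (f z) ≤ map f (𝓝 z) := by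
  refine (hf.analyticAt (hU.mem_nhds hz)).eventually_constant_or_nhds_le_map_nhds.resolve_left
    fun hconst => ?_
  obtain ⟨w, ⟨hw, hwU⟩, hwz⟩ :=
    (((hconst.and (hU.mem_nhds hz)).filter_mono nhdsWithin_le_nhds).and
      (self_mem_nhdsWithin (a := z) (s := {z}ᶜ))).exists
  exact hwz (hi hwU hz hw)

theorem continuousAt_invFunOn (hU : IsOpen U) (hf : DifferentiableOn ℂ f U) (hi : InjOn f U)
    (hz : z ∈ U) : ContinuousAt (Function.invFunOn f U) (f z) := by
  rw [ContinuousAt, hi.leftInvOn_invFunOn hz]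
  refine (tendsto_map'_iff.2 ?_).mono_left (nhds_le_map_nhds_of_injOn hU hf hi hz)
  refine tendsto_id.congr' ?_
  filter_upwards [hU.mem_nhds hz] with y hy
  exact (hi.leftInvOn_invFunOn hy).symm

theorem eventually_deriv_ne_zero_of_injOn (hU : IsOpen U) (hf : DifferentiableOn ℂ f U)
    (hi : InjOn f U) (hz : z ∈ U) : ∀ᶠ w in 𝓝[≠] z, deriv f w ≠ 0 := by
  have hderiv := (hf.analyticAt (hU.mem_nhds hz)).deriv
  refine hderiv.eventually_eq_zero_or_eventually_ne_zero.resolve_left fun hzero => ?_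
  obtain ⟨ε, hε, hball⟩ := Metric.eventually_nhds_iff_ball.1 (hzero.and (hU.mem_nhds hz))
  have hconst : ∀ y ∈ ball z ε, f y = f z := fun y hy =>
    isOpen_ball.is_const_of_deriv_eq_zero (convex_ball z ε).isPreconnected
      (hf.mono fun w hw => (hball w hw).2) (fun w hw => (hball w hw).1) hy (mem_ball_self hε)
  have hmem : ∀ᶠ w in 𝓝[≠] z, w ∈ ball z ε := nhdsWithin_le_nhds (ball_mem_nhds z hε)
  obtain ⟨w, hw, hwz⟩ := (hmem.and (self_mem_nhdsWithin (a := z) (s := {z}ᶜ))).exists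
  exact hwz (hi (hball w hw).2 hz (hconst w hw))

theorem eventually_mem_image_of_injOn (hU : IsOpen U) (hf : DifferentiableOn ℂ f U)
    (hi : InjOn f U) (hz : z ∈ U) : ∀ᶠ w in 𝓝 (f z), w ∈ f '' U :=
  nhds_le_map_nhds_of_injOn hU hf hi hz (image_mem_map (hU.mem_nhds hz))

theorem differentiableAt_invFunOn_of_deriv_ne_zero (hU : IsOpen U) (hf : DifferentiableOn ℂ f U)
    (hi : InjOn f U) (hz : z ∈ U) (hderiv : deriv f z ≠ 0) :
    DifferentiableAt ℂ (Function.invFunOn f U) (f z) := by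
  have hinv := hi.leftInvOn_invFunOn
  have hasDeriv : HasDerivAt f (deriv f z) (Function.invFunOn f U (f z)) := by
    rw [hinv hz]
    exact (hf.differentiableAt (hU.mem_nhds hz)).hasDerivAt
  refine (HasDerivAt.of_local_left_inverse (continuousAt_invFunOn hU hf hi hz) hasDeriv hderiv
    ?_).differentiableAt
  filter_upwards [eventually_mem_image_of_injOn hU hf hi hz]
  rintro _ ⟨u, hu, rfl⟩
  rw [hinv hu]

/-- The zeros of `deriv f` are isolated, so they are removable singularities of the inverse. -/
theorem differentiableAt_invFunOn (hU : IsOpen U) (hf : DifferentiableOn ℂ f U) (hi : InjOn f U)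
    (hz : z ∈ U) : DifferentiableAt ℂ (Function.invFunOn f U) (f z) := by
  have hinv := hi.leftInvOn_invFunOn
  have hcont := continuousAt_invFunOn hU hf hi hz
  have hderiv := eventually_nhdsWithin_iff.1 (eventually_deriv_ne_zero_of_injOn hU hf hi hz)
  rw [← hinv hz] at hderiv
  refine (analyticAt_of_differentiable_on_punctured_nhds_of_continuousAt ?_
    hcont).differentiableAt
  rw [eventually_nhdsWithin_iff]
  filter_upwards [hcont.eventually hderiv, eventually_mem_image_of_injOn hU hf hi hz]
  rintro _ hu ⟨u, huU, rfl⟩ hne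
  rw [hinv huU, hinv hz] at hu
  exact differentiableAt_invFunOn_of_deriv_ne_zero hU hf hi huU
    (hu fun huz => hne (congrArg f huz))

end Univalent

/-! ### The inverse of the exterior conformal map -/

theorem isPreconnected_norm_gt (R : ℝ) : IsPreconnected {w : ℂ | R < ‖w‖} := by
  simpa [closedBall, compl_ofPred] using
    isPreconnected_compl_closedBall one_lt_rank_real_complex (0 : ℂ) R

/-- The conformal map `Ψ = Φ⁻¹ : 𝔻* → Ω`; its values off `𝔻*` are junk. -/
def extParam (Ω : Set ℂ) (Φ : ℂ → ℂ) : ℂ → ℂ := Function.invFunOn Φ Ω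

namespace IsExtConformal

variable {Ω : Set ℂ} {Φ : ℂ → ℂ} {z w : ℂ} {δ r : ℝ}

theorem bijOn_extParam (h : IsExtConformal Ω Φ) : BijOn (extParam Ω Φ) extDisk Ω :=
  h.2.1.invOn_invFunOn.symm.bijOn h.2.1.surjOn.mapsTo_invFunOn h.2.1.mapsTo

theorem extParam_apply (h : IsExtConformal Ω Φ) (hz : z ∈ Ω) : extParam Ω Φ (Φ z) = z :=
  h.2.1.invOn_invFunOn.1 hz

theorem apply_extParam (h : IsExtConformal Ω Φ) (hw : w ∈ extDisk) : Φ (extParam Ω Φ w) = w :=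
  h.2.1.invOn_invFunOn.2 hw

theorem differentiableOn_extParam (h : IsExtConformal Ω Φ) (hΩ : IsOpen Ω) :
    DifferentiableOn ℂ (extParam Ω Φ) extDisk := by
  intro w hw
  obtain ⟨z, hz, rfl⟩ := h.2.1.surjOn hw
  exact (differentiableAt_invFunOn hΩ h.1 h.2.1.injOn hz).differentiableWithinAt

theorem tendsto_norm (h : IsExtConformal Ω Φ) :
    Tendsto (fun z => ‖Φ z‖) (cobounded ℂ) atTop := by
  obtain ⟨c, hc, hlim⟩ := h.2.2
  have hnorm : Tendsto (fun z => ‖Φ z / z‖) (cobounded ℂ) (𝓝 c) := by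
    simpa [abs_of_pos hc] using hlim.norm
  refine (hnorm.pos_mul_atTop hc tendsto_norm_cobounded_atTop).congr' ?_
  filter_upwards [eventually_ne_cobounded (0 : ℂ)] with z hz
  rw [norm_div, div_mul_cancel₀ _ (norm_ne_zero_iff.2 hz)]

/-- On a large circle `Φ` is bounded by some `M`, so `Ψ` maps the connected set `|w| > M` into the
complement of the circle, hence into its exterior. -/
theorem exists_forall_lt_norm_extParam (h : IsExtConformal Ω Φ) (hΩ : IsOpen Ω)
    (hΩc : Ω ∈ cobounded ℂ) (R : ℝ) :
    ∃ M ≥ 1, ∀ w : ℂ, M < ‖w‖ → R < ‖extParam Ω Φ w‖ := by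
  obtain ⟨R₀, hR₀⟩ := (isBounded_def.2 (by rwa [compl_compl]) : IsBounded Ωᶜ).subset_closedBall 0
  have hlarge : ∀ z, R₀ < ‖z‖ → z ∈ Ω := fun z hz => by
    by_contra hzΩ
    exact absurd (mem_closedBall_zero_iff.1 (hR₀ hzΩ)) (not_le.2 hz)
  obtain ⟨R₁, hR₁⟩ := exists_gt (max R R₀)
  rw [max_lt_iff] at hR₁
  have hsphere : sphere (0 : ℂ) R₁ ⊆ Ω := fun z hz =>
    hlarge z (hR₁.2.trans_eq (mem_sphere_zero_iff_norm.1 hz).symm)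
  obtain ⟨M, hM⟩ := (isCompact_sphere (0 : ℂ) R₁).exists_bound_of_continuousOn
    (h.1.continuousOn.mono hsphere)
  have hext : {w : ℂ | max M 1 < ‖w‖} ⊆ extDisk := fun w hw => (le_max_right M 1).trans_lt hw
  obtain ⟨y, hyM, hyR⟩ := ((h.tendsto_norm.eventually (eventually_gt_atTop (max M 1))).and
    (tendsto_norm_cobounded_atTop.eventually (eventually_gt_atTop R₁))).exists
  refine ⟨max M 1, le_max_right _ _, fun w hw => hR₁.1.trans ?_⟩
  by_contra! hle
  obtain ⟨v, hv, hvR⟩ := (isPreconnected_norm_gt (max M 1)).intermediate_value hw hyM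
    ((h.differentiableOn_extParam hΩ).continuousOn.mono hext).norm
    ⟨hle, by rw [h.extParam_apply (hlarge y (hR₁.2.trans hyR))]; exact hyR.le⟩
  have hvM := hM _ (mem_sphere_zero_iff_norm.2 hvR)
  rw [h.apply_extParam (hext hv)] at hvM
  exact absurd hv (not_lt.2 (hvM.trans (le_max_left M 1)))

theorem eventually_norm_lt (h : IsExtConformal Ω Φ) (hΩ : IsOpen Ω) (hΩc : Ω ∈ cobounded ℂ)
    (hz : z ∉ Ω) (hr : 1 < r) : ∀ᶠ u in 𝓝[Ω] z, ‖Φ u‖ < r := by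
  obtain ⟨M, -, hM⟩ := h.exists_forall_lt_norm_extParam hΩ hΩc (‖z‖ + 1)
  have hK : IsCompact (closedBall (0 : ℂ) M ∩ {w | r ≤ ‖w‖}) :=
    (isCompact_closedBall _ _).inter_right (isClosed_le continuous_const continuous_norm)
  have hKext : closedBall (0 : ℂ) M ∩ {w | r ≤ ‖w‖} ⊆ extDisk := fun w hw => hr.trans_le hw.2
  have hclosed := (hK.image_of_continuousOn
    ((h.differentiableOn_extParam hΩ).continuousOn.mono hKext)).isClosed
  have hzK : z ∉ extParam Ω Φ '' (closedBall (0 : ℂ) M ∩ {w | r ≤ ‖w‖}) := fun hzK =>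
    hz ((image_mono hKext).trans h.bijOn_extParam.image_eq.subset hzK)
  have hnorm : ∀ᶠ u in 𝓝 z, ‖u‖ < ‖z‖ + 1 :=
    continuous_norm.continuousAt.eventually (gt_mem_nhds (lt_add_one _))
  filter_upwards [nhdsWithin_le_nhds (hclosed.isOpen_compl.mem_nhds hzK),
    nhdsWithin_le_nhds hnorm, self_mem_nhdsWithin] with u huK hu huΩ
  by_contra! hle
  refine huK ⟨Φ u, ⟨?_, hle⟩, h.extParam_apply huΩ⟩
  rw [mem_closedBall_zero_iff]
  by_contra! hlt
  have := hM _ hlt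
  rw [h.extParam_apply huΩ] at this
  exact this.not_gt hu

theorem exists_dist_extParam_lt (h : IsExtConformal Ω Φ) (hΩ : IsOpen Ω) (hΩc : Ω ∈ cobounded ℂ)
    (hz : z ∈ frontier Ω) {ε : ℝ} (hε : 0 < ε) (hr : 1 < r) :
    ∃ w ∈ extDisk, ‖w‖ < r ∧ dist (extParam Ω Φ w) z < ε := by
  rw [hΩ.frontier_eq] at hz
  have := mem_closure_iff_nhdsWithin_neBot.1 hz.1
  obtain ⟨u, ⟨hur, huz⟩, hu⟩ := (((h.eventually_norm_lt hΩ hΩc hz.2 hr).and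
    (nhdsWithin_le_nhds (ball_mem_nhds z hε))).and self_mem_nhdsWithin).exists
  exact ⟨Φ u, h.2.1.mapsTo hu, hur, by rwa [h.extParam_apply hu]⟩

theorem levelCurve_eq_image (h : IsExtConformal Ω Φ) (hδ : 0 < δ) :
    levelCurve Ω Φ δ = extParam Ω Φ '' sphere 0 (1 + δ) := by
  ext z
  constructor
  · rintro ⟨hz, hzδ⟩
    exact ⟨Φ z, mem_sphere_zero_iff_norm.2 hzδ, h.extParam_apply hz⟩
  · rintro ⟨w, hw, rfl⟩
    have hwδ := mem_sphere_zero_iff_norm.1 hw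
    have hwext : w ∈ extDisk := (lt_add_of_pos_right 1 hδ).trans_eq hwδ.symm
    exact ⟨h.bijOn_extParam.mapsTo hwext, by rw [h.apply_extParam hwext, hwδ]⟩

theorem isCompact_levelCurve (h : IsExtConformal Ω Φ) (hΩ : IsOpen Ω) (hδ : 0 < δ) :
    IsCompact (levelCurve Ω Φ δ) := by
  rw [h.levelCurve_eq_image hδ]
  refine (isCompact_sphere _ _).image_of_continuousOn
    ((h.differentiableOn_extParam hΩ).continuousOn.mono fun w hw => ?_)
  exact (lt_add_of_pos_right 1 hδ).trans_eq (mem_sphere_zero_iff_norm.1 hw).symm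

theorem levelCurve_nonempty (h : IsExtConformal Ω Φ) (hδ : 0 < δ) :
    (levelCurve Ω Φ δ).Nonempty := by
  rw [h.levelCurve_eq_image hδ]
  exact ((NormedSpace.sphere_nonempty).2 (by positivity)).image _

theorem rho_pos (h : IsExtConformal Ω Φ) (hΩ : IsOpen Ω) (hδ : 0 < δ) (hz : z ∉ Ω) :
    0 < rho Ω Φ δ z :=
  ((h.isCompact_levelCurve hΩ hδ).isClosed.notMem_iff_infDist_pos (h.levelCurve_nonempty hδ)).1
    fun hzδ => hz hzδ.1

theorem exists_forall_rho_le (h : IsExtConformal Ω Φ) {Γ : Set ℂ} (hΓ : IsBounded Γ) (δ₀ : ℝ) :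
    ∃ R > 0, ∀ δ, 0 < δ → δ ≤ δ₀ → ∀ z ∈ Γ, rho Ω Φ δ z ≤ R := by
  obtain ⟨R₁, -, hR₁⟩ := hasBasis_cobounded_norm.eventually_iff.1
    (h.tendsto_norm.eventually (eventually_gt_atTop (1 + δ₀)))
  obtain ⟨R₂, hR₂, hΓR₂⟩ := hΓ.exists_pos_norm_le
  refine ⟨R₂ + |R₁|, by positivity, fun δ hδ hδδ₀ z hz => ?_⟩
  obtain ⟨y, hy⟩ := h.levelCurve_nonempty hδ
  have hyR₁ : ‖y‖ ≤ R₁ := by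
    by_contra! hlt
    have := hR₁ hlt.le
    rw [hy.2] at this
    linarith
  calc rho Ω Φ δ z ≤ dist z y := infDist_le_dist_of_mem hy
    _ ≤ ‖z‖ + ‖y‖ := dist_le_norm_add_norm z y
    _ ≤ R₂ + |R₁| := add_le_add (hΓR₂ z hz) (hyR₁.trans (le_abs_self _))

end IsExtConformal

/-! ### A length-area estimate -/

theorem setLIntegral_Ioc_eq_of_periodic {g : ℝ → ℝ≥0∞} {T : ℝ} (hg : Function.Periodic g T)
    (hT : 0 < T) (s t : ℝ) : ∫⁻ θ in Ioc s (s + T), g θ = ∫⁻ θ in Ioc t (t + T), g θ :=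
  (isAddFundamentalDomain_Ioc hT s).setLIntegral_eq (isAddFundamentalDomain_Ioc hT t) g
    hg.map_vadd_zmultiples

theorem lintegral_eq_lintegral_circleMap {D : ℂ → ℝ≥0∞} (hD : Measurable D) (c : ℂ) :
    ∫⁻ z, D z = ∫⁻ r in Ioi (0 : ℝ), ∫⁻ θ in Ioc (-Real.pi) Real.pi,
      ENNReal.ofReal r * D (circleMap c r θ) := by
  have hcircle : ∀ p : ℝ × ℝ, c + Complex.polarCoord.symm p = circleMap c p.1 p.2 := fun p => by
    rw [Complex.polarCoord_symm_apply, circleMap, exp_mul_I, ofReal_cos, ofReal_sin]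
  have hmeas : Measurable fun p : ℝ × ℝ => ENNReal.ofReal p.1 * D (circleMap c p.1 p.2) := by
    unfold circleMap
    fun_prop
  rw [← lintegral_add_left_eq_self D c, ← Complex.lintegral_comp_polarCoord_symm,
    _root_.polarCoord_target, Measure.volume_eq_prod, ← Measure.prod_restrict,
    restrict_Ioo_eq_restrict_Ioc]
  simp only [smul_eq_mul, hcircle]
  exact lintegral_prod _ hmeas.aemeasurable

theorem sq_lintegral_le {α : Type*} [MeasurableSpace α] {μ : Measure α} {g : α → ℝ≥0∞}
    (hg : AEMeasurable g μ) : (∫⁻ x, g x ∂μ) ^ 2 ≤ μ univ * ∫⁻ x, g x ^ 2 ∂μ := by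
  have holder := ENNReal.lintegral_mul_le_Lp_mul_Lq μ Real.HolderConjugate.two_two
    (f := fun _ => 1) (g := g) aemeasurable_const hg
  simp only [Pi.mul_apply, one_mul, ENNReal.one_rpow, lintegral_const] at holder
  calc (∫⁻ x, g x ∂μ) ^ 2
      ≤ (μ univ ^ (1 / 2 : ℝ) * (∫⁻ x, g x ^ (2 : ℝ) ∂μ) ^ (1 / 2 : ℝ)) ^ 2 := by gcongr
    _ = μ univ * ∫⁻ x, g x ^ 2 ∂μ := by
        rw [mul_pow, ← ENNReal.rpow_natCast, ← ENNReal.rpow_natCast, ← ENNReal.rpow_mul,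
          ← ENNReal.rpow_mul]
        norm_num

/-- A radial density on the plane with finite square integral and infinite integral along rays. -/
def logDensity (t : ℝ) : ℝ := 2 * t / ((Real.exp 1 + t ^ 2) * Real.log (Real.exp 1 + t ^ 2))

/-- The primitive of `logDensity`: the distance between the circles of radii `s` and `t` in the
metric `logDensity ‖z‖ * |dz|` is `|logLog t - logLog s|`. -/
def logLog (t : ℝ) : ℝ := Real.log (Real.log (Real.exp 1 + t ^ 2))

theorem one_le_log_exp_one_add_sq (t : ℝ) : 1 ≤ Real.log (Real.exp 1 + t ^ 2) := by
  rw [Real.le_log_iff_exp_le (by positivity)]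
  nlinarith [sq_nonneg t]

theorem logDensity_nonneg {t : ℝ} (ht : 0 ≤ t) : 0 ≤ logDensity t := by
  have := one_le_log_exp_one_add_sq t
  unfold logDensity
  positivity

theorem continuous_logDensity : Continuous logDensity := by
  unfold logDensity
  refine Continuous.div (by fun_prop) (Continuous.mul (by fun_prop)
    (Continuous.log (by fun_prop) fun t => by positivity)) fun t => ?_
  have := one_le_log_exp_one_add_sq t
  positivity

theorem logLog_le_logLog {s t : ℝ} (hs : 0 ≤ s) (hst : s ≤ t) : logLog s ≤ logLog t := by
  have := one_le_log_exp_one_add_sq s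
  unfold logLog
  gcongr

theorem tendsto_log_exp_one_add_sq :
    Tendsto (fun t : ℝ => Real.log (Real.exp 1 + t ^ 2)) atTop atTop :=
  Real.tendsto_log_atTop.comp
    (tendsto_atTop_add_const_left _ _ (tendsto_pow_atTop two_ne_zero))

theorem tendsto_logLog : Tendsto logLog atTop atTop :=
  Real.tendsto_log_atTop.comp tendsto_log_exp_one_add_sq

theorem hasDerivAt_neg_two_div_log (t : ℝ) :
    HasDerivAt (fun t : ℝ => -2 / Real.log (Real.exp 1 + t ^ 2))
      (4 * t / ((Real.exp 1 + t ^ 2) * Real.log (Real.exp 1 + t ^ 2) ^ 2)) t := by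
  have hlog := one_le_log_exp_one_add_sq t
  have hpos : 0 < Real.exp 1 + t ^ 2 := by positivity
  have hderiv : HasDerivAt (fun t : ℝ => Real.exp 1 + t ^ 2) (2 * t) t := by
    simpa using (hasDerivAt_pow 2 t).const_add (Real.exp 1)
  simp only [div_eq_mul_inv (-2 : ℝ)]
  refine (((hderiv.log hpos.ne').inv (by linarith)).const_mul (-2)).congr_deriv ?_
  field_simp
  ring

theorem mul_logDensity_sq_le {t : ℝ} (ht : 0 ≤ t) : t * logDensity t ^ 2 ≤
    4 * t / ((Real.exp 1 + t ^ 2) * Real.log (Real.exp 1 + t ^ 2) ^ 2) := by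
  have hlog := one_le_log_exp_one_add_sq t
  have hpos : 0 < Real.exp 1 + t ^ 2 := by positivity
  have hle : t ^ 2 / (Real.exp 1 + t ^ 2) ≤ 1 := by
    rw [div_le_one hpos]
    linarith [Real.exp_pos 1]
  calc t * logDensity t ^ 2 = t ^ 2 / (Real.exp 1 + t ^ 2) *
        (4 * t / ((Real.exp 1 + t ^ 2) * Real.log (Real.exp 1 + t ^ 2) ^ 2)) := by
        unfold logDensity
        field_simp
        ring
    _ ≤ 1 * (4 * t / ((Real.exp 1 + t ^ 2) * Real.log (Real.exp 1 + t ^ 2) ^ 2)) := by gcongr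
    _ = _ := one_mul _

theorem lintegral_Ioi_mul_logDensity_sq_le :
    ∫⁻ t in Ioi (0 : ℝ), ENNReal.ofReal (t * logDensity t ^ 2) ≤ ENNReal.ofReal 2 := by
  have hlim : Tendsto (fun t : ℝ => -2 / Real.log (Real.exp 1 + t ^ 2)) atTop (𝓝 0) :=
    tendsto_log_exp_one_add_sq.const_div_atTop _
  have hnonneg : ∀ t ∈ Ioi (0 : ℝ),
      0 ≤ 4 * t / ((Real.exp 1 + t ^ 2) * Real.log (Real.exp 1 + t ^ 2) ^ 2) := fun t ht => by
    have : 0 < t := ht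
    positivity
  calc ∫⁻ t in Ioi (0 : ℝ), ENNReal.ofReal (t * logDensity t ^ 2)
      ≤ ∫⁻ t in Ioi (0 : ℝ), ENNReal.ofReal
          (4 * t / ((Real.exp 1 + t ^ 2) * Real.log (Real.exp 1 + t ^ 2) ^ 2)) :=
        setLIntegral_mono' measurableSet_Ioi fun t ht =>
          ENNReal.ofReal_le_ofReal (mul_logDensity_sq_le (le_of_lt ht))
    _ = ENNReal.ofReal 2 := by
        rw [← ofReal_integral_eq_lintegral_ofReal
          (integrableOn_Ioi_deriv_of_nonneg' (fun t _ => hasDerivAt_neg_two_div_log t) hnonneg hlim)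
          ((ae_restrict_iff' measurableSet_Ioi).2 (Eventually.of_forall hnonneg)),
          integral_Ioi_of_hasDerivAt_of_nonneg' (fun t _ => hasDerivAt_neg_two_div_log t)
            hnonneg hlim]
        norm_num

theorem lintegral_logDensity_norm_sq_le :
    ∫⁻ y : ℂ, ENNReal.ofReal (logDensity ‖y‖ ^ 2) ≤ ENNReal.ofReal (4 * Real.pi) := by
  have hmeas : Measurable fun y : ℂ => ENNReal.ofReal (logDensity ‖y‖ ^ 2) :=
    ((continuous_logDensity.comp continuous_norm).pow 2).measurable.ennreal_ofReal
  rw [lintegral_eq_lintegral_circleMap hmeas 0]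
  calc ∫⁻ r in Ioi (0 : ℝ), ∫⁻ θ in Ioc (-Real.pi) Real.pi,
        ENNReal.ofReal r * ENNReal.ofReal (logDensity ‖circleMap 0 r θ‖ ^ 2)
      = ∫⁻ r in Ioi (0 : ℝ), ENNReal.ofReal (2 * Real.pi) *
          ENNReal.ofReal (r * logDensity r ^ 2) := by
        refine setLIntegral_congr_fun measurableSet_Ioi fun r hr => ?_
        have hr : 0 < r := hr
        simp only [norm_circleMap_zero, abs_of_pos hr, setLIntegral_const, Real.volume_Ioc,
          ENNReal.ofReal_mul hr.le]
        rw [mul_comm, sub_neg_eq_add, ← two_mul]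
    _ = ENNReal.ofReal (2 * Real.pi) *
          ∫⁻ r in Ioi (0 : ℝ), ENNReal.ofReal (r * logDensity r ^ 2) :=
        lintegral_const_mul' _ _ ENNReal.ofReal_ne_top
    _ ≤ ENNReal.ofReal (2 * Real.pi) * ENNReal.ofReal 2 := by
        gcongr
        exact lintegral_Ioi_mul_logDensity_sq_le
    _ = ENNReal.ofReal (4 * Real.pi) := by
        rw [← ENNReal.ofReal_mul (by positivity)]
        ring_nf

theorem abs_deriv_logLog_norm_le {F : ℝ → ℂ} {F' : ℂ} {θ : ℝ} (hF : HasDerivAt F F' θ) :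
    |deriv (fun θ => logLog ‖F θ‖) θ| ≤ ‖F'‖ * logDensity ‖F θ‖ := by
  have hlog := one_le_log_exp_one_add_sq ‖F θ‖
  have hpos : 0 < Real.exp 1 + ‖F θ‖ ^ 2 := by positivity
  have hderiv : HasDerivAt (fun θ => logLog ‖F θ‖) _ θ :=
    ((hF.norm_sq.const_add (Real.exp 1)).log hpos.ne').log (by linarith)
  rw [hderiv.deriv, abs_div, abs_div, abs_of_pos hpos, abs_of_pos (zero_lt_one.trans_le hlog),
    div_div, abs_mul, abs_two, logDensity, ← mul_div_assoc]
  refine div_le_div_of_nonneg_right ?_ (by positivity)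
  linarith [abs_real_inner_le_norm (F θ) F']

section LengthArea

variable {f : ℂ → ℂ} {U : Set ℂ} {c : ℂ} {r s t : ℝ}

theorem abs_logLog_sub_le_lintegral (hU : IsOpen U) (hf : DifferentiableOn ℂ f U) (hr : 0 ≤ r)
    (hst : s ≤ t) (harc : ∀ θ ∈ Icc s t, circleMap c r θ ∈ U) :
    ENNReal.ofReal |logLog ‖f (circleMap c r t)‖ - logLog ‖f (circleMap c r s)‖| ≤
      ∫⁻ θ in Icc s t, ENNReal.ofReal
        (r * (‖deriv f (circleMap c r θ)‖ * logDensity ‖f (circleMap c r θ)‖)) := by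
  have hF : ContDiffOn ℝ 1 (fun θ => f (circleMap c r θ)) (Icc s t) :=
    ((hf.contDiffOn hU).restrict_scalars ℝ).comp (contDiff_circleMap c r).contDiffOn harc
  have hlogLog : ContDiffOn ℝ 1 (fun θ => logLog ‖f (circleMap c r θ)‖) (Icc s t) := by
    unfold logLog
    refine ContDiffOn.log (ContDiffOn.log (contDiffOn_const.add (hF.norm_sq ℝ)) fun x _ => ?_)
      fun x _ => ?_
    · positivity
    · have := one_le_log_exp_one_add_sq ‖f (circleMap c r x)‖
      positivity
  have henorm := enorm_sub_le_lintegral_deriv_of_contDiffOn_Icc hlogLog hst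
  rw [← ofReal_norm, Real.norm_eq_abs] at henorm
  refine henorm.trans (setLIntegral_mono' measurableSet_Icc fun θ hθ => ?_)
  have hderiv : HasDerivAt (fun θ => f (circleMap c r θ))
      (deriv f (circleMap c r θ) * (circleMap 0 r θ * I)) θ :=
    (hf.differentiableAt (hU.mem_nhds (harc θ hθ))).hasDerivAt.comp_of_eq θ
      (hasDerivAt_circleMap c r θ) rfl
  rw [← ofReal_norm, Real.norm_eq_abs]
  refine ENNReal.ofReal_le_ofReal ((abs_deriv_logLog_norm_le hderiv).trans_eq ?_)
  rw [norm_mul, norm_mul, norm_I, mul_one, norm_circleMap_zero, abs_of_nonneg hr]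
  ring

/-- The square of the density `logDensity ‖z‖` pulled back by `f`, extended by zero off `U`. -/
def sqPullbackDensity (f : ℂ → ℂ) (U : Set ℂ) : ℂ → ℝ≥0∞ :=
  U.indicator fun w => ENNReal.ofReal ((‖deriv f w‖ * logDensity ‖f w‖) ^ 2)

theorem measurable_sqPullbackDensity (hU : IsOpen U) (hf : DifferentiableOn ℂ f U) :
    Measurable (sqPullbackDensity f U) := by
  classical
  rw [sqPullbackDensity, ← piecewise_eq_indicator]
  refine ContinuousOn.measurable_piecewise ?_ continuousOn_const hU.measurableSet
  refine ENNReal.continuous_ofReal.comp_continuousOn (ContinuousOn.pow (ContinuousOn.mul ?_ ?_) 2)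
  · exact (hf.deriv hU).continuousOn.norm
  · exact continuous_logDensity.comp_continuousOn hf.continuousOn.norm

theorem lintegral_sqPullbackDensity_le (hU : IsOpen U) (hf : DifferentiableOn ℂ f U)
    (hi : InjOn f U) : ∫⁻ z, sqPullbackDensity f U z ≤ ENNReal.ofReal (4 * Real.pi) := by
  have hderiv : ∀ z ∈ U, HasFDerivWithinAt f
      ((ContinuousLinearMap.toSpanSingleton ℂ (deriv f z)).restrictScalars ℝ) U z := fun z hz =>
    ((hf.differentiableAt (hU.mem_nhds hz)).hasDerivAt.hasFDerivAt.restrictScalars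
      ℝ).hasFDerivWithinAt
  have hdet : ∀ z, |((ContinuousLinearMap.toSpanSingleton ℂ (deriv f z)).restrictScalars ℝ).det| =
      ‖deriv f z‖ ^ 2 := fun z => by
    simp [ContinuousLinearMap.det, LinearMap.det_restrictScalars, Algebra.norm_complex_eq,
      Complex.normSq_eq_norm_sq]
  calc ∫⁻ z, sqPullbackDensity f U z
      = ∫⁻ z in U, ENNReal.ofReal (‖deriv f z‖ ^ 2) * ENNReal.ofReal (logDensity ‖f z‖ ^ 2) := by
        rw [sqPullbackDensity, lintegral_indicator hU.measurableSet]
        refine lintegral_congr fun z => ?_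
        rw [← ENNReal.ofReal_mul (by positivity), mul_pow]
    _ = ∫⁻ y in f '' U, ENNReal.ofReal (logDensity ‖y‖ ^ 2) := by
        rw [lintegral_image_eq_lintegral_abs_det_fderiv_mul volume hU.measurableSet hderiv hi]
        simp only [hdet]
    _ ≤ ∫⁻ y, ENNReal.ofReal (logDensity ‖y‖ ^ 2) := setLIntegral_le_lintegral _ _
    _ ≤ ENNReal.ofReal (4 * Real.pi) := lintegral_logDensity_norm_sq_le

theorem sq_logLog_sub_le_lintegral_Icc (hU : IsOpen U) (hf : DifferentiableOn ℂ f U) (hr : 0 ≤ r)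
    (hst : s ≤ t) (harc : ∀ θ ∈ Icc s t, circleMap c r θ ∈ U) :
    ENNReal.ofReal ((logLog ‖f (circleMap c r t)‖ - logLog ‖f (circleMap c r s)‖) ^ 2) ≤
      ENNReal.ofReal (t - s) *
        ∫⁻ θ in Icc s t, ENNReal.ofReal (r ^ 2) * sqPullbackDensity f U (circleMap c r θ) := by
  have hcircle : ContinuousOn (circleMap c r) (Icc s t) := (continuous_circleMap c r).continuousOn
  have hcont : ContinuousOn (fun θ => r * (‖deriv f (circleMap c r θ)‖ *
      logDensity ‖f (circleMap c r θ)‖)) (Icc s t) :=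
    continuousOn_const.mul (((hf.deriv hU).continuousOn.comp hcircle harc).norm.mul
      (continuous_logDensity.comp_continuousOn (hf.continuousOn.comp hcircle harc).norm))
  have hsq := sq_lintegral_le (μ := volume.restrict (Icc s t))
    (hcont.aemeasurable measurableSet_Icc).ennreal_ofReal
  rw [Measure.restrict_apply_univ, Real.volume_Icc] at hsq
  rw [← sq_abs, ENNReal.ofReal_pow (abs_nonneg _)]
  refine (pow_le_pow_left₀ zero_le (abs_logLog_sub_le_lintegral hU hf hr hst harc) 2).trans
    (hsq.trans_eq ?_)
  congr 1
  refine setLIntegral_congr_fun measurableSet_Icc fun θ hθ => ?_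
  have := logDensity_nonneg (norm_nonneg (f (circleMap c r θ)))
  simp only [sqPullbackDensity]
  rw [indicator_of_mem (harc θ hθ), ← ENNReal.ofReal_mul (by positivity), ← mul_pow,
    ENNReal.ofReal_pow (by positivity)]

theorem sq_logLog_sub_le (hU : IsOpen U) (hf : DifferentiableOn ℂ f U) (hr : 0 ≤ r)
    (hst : s ≤ t) (hts : t ≤ s + 2 * Real.pi) (harc : ∀ θ ∈ Icc s t, circleMap c r θ ∈ U) :
    ENNReal.ofReal ((logLog ‖f (circleMap c r t)‖ - logLog ‖f (circleMap c r s)‖) ^ 2) ≤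
      ENNReal.ofReal (2 * Real.pi * r) * ∫⁻ θ in Ioc (-Real.pi) Real.pi,
        ENNReal.ofReal r * sqPullbackDensity f U (circleMap c r θ) := by
  have hperiodic : Function.Periodic
      (fun θ => ENNReal.ofReal r * sqPullbackDensity f U (circleMap c r θ)) (2 * Real.pi) :=
    (periodic_circleMap c r).comp fun w => ENNReal.ofReal r * sqPullbackDensity f U w
  refine (sq_logLog_sub_le_lintegral_Icc hU hf hr hst harc).trans ?_
  calc ENNReal.ofReal (t - s) *
        ∫⁻ θ in Icc s t, ENNReal.ofReal (r ^ 2) * sqPullbackDensity f U (circleMap c r θ)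
      ≤ ENNReal.ofReal (2 * Real.pi) * ∫⁻ θ in Ioc s (s + 2 * Real.pi),
          ENNReal.ofReal (r ^ 2) * sqPullbackDensity f U (circleMap c r θ) := by
        gcongr ?_ * ?_
        · exact ENNReal.ofReal_le_ofReal (by linarith)
        · rw [← restrict_Ioc_eq_restrict_Icc]
          exact lintegral_mono_set (Ioc_subset_Ioc_right hts)
    _ = ENNReal.ofReal (2 * Real.pi * r) * ∫⁻ θ in Ioc s (s + 2 * Real.pi),
          ENNReal.ofReal r * sqPullbackDensity f U (circleMap c r θ) := by
        simp only [pow_two, ENNReal.ofReal_mul hr, mul_assoc]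
        rw [lintegral_const_mul' _ _ ENNReal.ofReal_ne_top, ← mul_assoc,
          ← ENNReal.ofReal_mul Real.two_pi_pos.le, mul_assoc]
    _ = _ := by
        rw [setLIntegral_Ioc_eq_of_periodic hperiodic Real.two_pi_pos s (-Real.pi)]
        congr 4
        ring

/-- Integrating `sq_logLog_sub_le` against `dr` gives the area integral of the pulled back density,
which is at most `4π` because `f` is injective. -/
theorem sq_mul_sub_le_of_forall_circleMap (hU : IsOpen U) (hf : DifferentiableOn ℂ f U)
    (hi : InjOn f U) {r₁ r₂ L : ℝ} (hr₁ : 0 ≤ r₁) (hr : r₁ < r₂) (hL : 0 ≤ L)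
    (hcross : ∀ r ∈ Ioo r₁ r₂, ∃ s t, s ≤ t ∧ t ≤ s + 2 * Real.pi ∧
      (∀ θ ∈ Icc s t, circleMap c r θ ∈ U) ∧
      L ≤ |logLog ‖f (circleMap c r t)‖ - logLog ‖f (circleMap c r s)‖|) :
    L ^ 2 * (r₂ - r₁) ≤ 8 * Real.pi ^ 2 * r₂ := by
  have hr₂ : 0 < r₂ := hr₁.trans_lt hr
  have hcircle : ∀ r ∈ Ioo r₁ r₂, ENNReal.ofReal (L ^ 2) ≤ ENNReal.ofReal (2 * Real.pi * r₂) *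
      ∫⁻ θ in Ioc (-Real.pi) Real.pi,
        ENNReal.ofReal r * sqPullbackDensity f U (circleMap c r θ) := fun r hr' => by
    obtain ⟨s, t, hst, hts, harc, hLst⟩ := hcross r hr'
    have hr0 : 0 < r := hr₁.trans_lt hr'.1
    calc ENNReal.ofReal (L ^ 2)
        ≤ ENNReal.ofReal ((logLog ‖f (circleMap c r t)‖ - logLog ‖f (circleMap c r s)‖) ^ 2) := by
          rw [← sq_abs (_ - _)]
          gcongr
      _ ≤ _ := sq_logLog_sub_le hU hf hr0.le hst hts harc
      _ ≤ _ := by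
          have := hr'.2.le
          gcongr
  have hintegrated : ENNReal.ofReal (L ^ 2 * (r₂ - r₁)) ≤
      ENNReal.ofReal (2 * Real.pi * r₂ * (4 * Real.pi)) := by
    rw [ENNReal.ofReal_mul (by positivity), ENNReal.ofReal_mul (by positivity)]
    calc ENNReal.ofReal (L ^ 2) * ENNReal.ofReal (r₂ - r₁)
        = ∫⁻ _ in Ioo r₁ r₂, ENNReal.ofReal (L ^ 2) := by rw [setLIntegral_const, Real.volume_Ioo]
      _ ≤ _ := setLIntegral_mono' measurableSet_Ioo hcircle
      _ = _ := lintegral_const_mul' _ _ ENNReal.ofReal_ne_top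
      _ ≤ ENNReal.ofReal (2 * Real.pi * r₂) * ∫⁻ z, sqPullbackDensity f U z := by
          rw [lintegral_eq_lintegral_circleMap (measurable_sqPullbackDensity hU hf) c]
          gcongr
          exact fun r hr' => hr₁.trans_lt hr'.1
      _ ≤ _ := by
          gcongr
          exact lintegral_sqPullbackDensity_le hU hf hi
  have := (ENNReal.ofReal_le_ofReal_iff (by positivity)).1 hintegrated
  linarith

end LengthArea

theorem isOpen_extDisk : IsOpen extDisk :=
  isOpen_lt continuous_const continuous_norm

theorem norm_circleMap_sq (c : ℂ) (r θ : ℝ) :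
    ‖circleMap c r θ‖ ^ 2 = ‖c‖ ^ 2 + r ^ 2 + 2 * ‖c‖ * r * Real.cos (θ - arg c) := by
  have hre : (circleMap c r θ).re = c.re + r * Real.cos θ := by simp [circleMap, exp_re]
  have him : (circleMap c r θ).im = c.im + r * Real.sin θ := by simp [circleMap, exp_im]
  rw [← normSq_eq_norm_sq, normSq_apply, hre, him, Real.cos_sub, ← norm_mul_cos_arg c,
    ← norm_mul_sin_arg c]
  linear_combination ‖c‖ ^ 2 * Real.sin_sq_add_cos_sq (arg c) + r ^ 2 * Real.sin_sq_add_cos_sq θ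

/-- The norm is a decreasing function of `|θ - arg c|` on the circle around `c`. -/
theorem circleMap_mem_extDisk {c : ℂ} {r s t θ : ℝ} (hr : 0 ≤ r) (hs : |s - arg c| ≤ Real.pi)
    (ht : |t - arg c| ≤ Real.pi) (hsr : circleMap c r s ∈ extDisk)
    (htr : circleMap c r t ∈ extDisk) (hθ : θ ∈ Icc s t) : circleMap c r θ ∈ extDisk := by
  have mem_of_le : ∀ x, |x - arg c| ≤ Real.pi → circleMap c r x ∈ extDisk →
      |θ - arg c| ≤ |x - arg c| → circleMap c r θ ∈ extDisk := fun x hx hxr hle => by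
    have hcos := Real.cos_le_cos_of_nonneg_of_le_pi (abs_nonneg _) hx hle
    rw [Real.cos_abs, Real.cos_abs] at hcos
    refine lt_of_lt_of_le hxr (le_of_sq_le_sq ?_ (norm_nonneg _))
    rw [norm_circleMap_sq, norm_circleMap_sq]
    gcongr
  rcases le_total 0 (θ - arg c) with h | h
  · exact mem_of_le t ht htr (abs_le_abs_of_nonneg h (by linarith [hθ.2]))
  · exact mem_of_le s hs hsr (abs_le_abs_of_nonpos h (by linarith [hθ.1]))

theorem exists_circleMap_eq {c u : ℂ} {r : ℝ} (h : dist u c = r) :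
    ∃ s, |s - arg c| ≤ Real.pi ∧ circleMap c r s = u := by
  obtain ⟨s, hs⟩ : u ∈ range (circleMap c r) := by
    rw [range_circleMap, ← h, abs_of_nonneg dist_nonneg]
    exact mem_sphere.2 rfl
  obtain ⟨t, ht, hst⟩ := (periodic_circleMap c r).exists_mem_Ico Real.two_pi_pos s
    (arg c - Real.pi)
  exact ⟨t, abs_le.2 ⟨by linarith [ht.1], by linarith [ht.2]⟩, hst.symm.trans hs⟩

theorem sq_mul_sub_le_of_forall_dist {f : ℂ → ℂ} (hf : DifferentiableOn ℂ f extDisk)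
    (hi : InjOn f extDisk) {c : ℂ} {r₁ r₂ s₁ s₂ : ℝ} (hr₁ : 0 ≤ r₁) (hr : r₁ < r₂) (hs₁ : 0 ≤ s₁)
    (hs₁₂ : s₁ ≤ s₂)
    (hcross : ∀ r ∈ Ioo r₁ r₂, ∃ u ∈ extDisk, ∃ v ∈ extDisk, dist u c = r ∧ dist v c = r ∧
      ‖f u‖ ≤ s₁ ∧ s₂ ≤ ‖f v‖) :
    (logLog s₂ - logLog s₁) ^ 2 * (r₂ - r₁) ≤ 8 * Real.pi ^ 2 * r₂ := by
  refine sq_mul_sub_le_of_forall_circleMap (c := c) isOpen_extDisk hf hi hr₁ hr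
    (sub_nonneg.2 (logLog_le_logLog hs₁ hs₁₂)) fun r hr' => ?_
  obtain ⟨u, hu, v, hv, huc, hvc, hfu, hfv⟩ := hcross r hr'
  obtain ⟨s, hs, rfl⟩ := exists_circleMap_eq huc
  obtain ⟨t, ht, rfl⟩ := exists_circleMap_eq hvc
  have hr0 : 0 ≤ r := hr₁.trans hr'.1.le
  have hle : logLog s₂ - logLog s₁ ≤
      logLog ‖f (circleMap c r t)‖ - logLog ‖f (circleMap c r s)‖ :=
    sub_le_sub (logLog_le_logLog (hs₁.trans hs₁₂) hfv) (logLog_le_logLog (norm_nonneg _) hfu)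
  have hs' := abs_le.1 hs
  have ht' := abs_le.1 ht
  rcases le_total s t with hst | hts
  · exact ⟨s, t, hst, by linarith, fun θ => circleMap_mem_extDisk hr0 hs ht hu hv,
      hle.trans (le_abs_self _)⟩
  · exact ⟨t, s, hts, by linarith, fun θ => circleMap_mem_extDisk hr0 ht hs hv hu,
      by rw [abs_sub_comm]; exact hle.trans (le_abs_self _)⟩

theorem sq_mul_sub_le_of_forall_dist_le {f : ℂ → ℂ} (hf : DifferentiableOn ℂ f extDisk)
    (hi : InjOn f extDisk) {c q : ℂ} {r₁ r₂ R₁ R₂ : ℝ} (hr₁ : 0 ≤ r₁) (hr : r₁ < r₂)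
    (hR₁ : 0 < R₁) (hR : R₁ ≤ R₂)
    (hcross : ∀ r ∈ Ioo r₁ r₂, ∃ u ∈ extDisk, ∃ v ∈ extDisk, dist u c = r ∧ dist v c = r ∧
      dist (f u) q ≤ R₁ ∧ R₂ ≤ dist (f v) q) :
    (logLog (R₂ / R₁) - logLog 1) ^ 2 * (r₂ - r₁) ≤ 8 * Real.pi ^ 2 * r₂ := by
  have hR₁' : (R₁ : ℂ) ≠ 0 := ofReal_ne_zero.2 hR₁.ne'
  have hnorm : ∀ w, ‖(f w - q) / R₁‖ = dist (f w) q / R₁ := fun w => by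
    rw [norm_div, norm_real, Real.norm_of_nonneg hR₁.le, dist_eq_norm]
  refine sq_mul_sub_le_of_forall_dist (f := fun w => (f w - q) / R₁) (c := c)
    ((hf.sub_const q).div_const _) (fun x hx y hy hxy => hi hx hy ?_) hr₁ hr zero_le_one
    ((one_le_div hR₁).2 hR) fun r hr' => ?_
  · exact sub_left_injective ((div_left_inj' hR₁').1 hxy)
  · obtain ⟨u, hu, v, hv, huc, hvc, hfu, hfv⟩ := hcross r hr'
    refine ⟨u, hu, v, hv, huc, hvc, ?_, ?_⟩ <;> rw [hnorm]
    · exact (div_le_one hR₁).2 hfu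
    · gcongr

/-! ### Quasisymmetry -/

/-- `g` distorts the ratios of distances from a point of `V` in a controlled way: bounded ratios
have bounded images. For topological embeddings of `ℂ` this is quasisymmetry. -/
def IsWeaklyQuasisymmetricOn {X Y : Type*} [PseudoMetricSpace X] [PseudoMetricSpace Y] (g : X → Y)
    (V : Set X) : Prop :=
  ∀ K > 0, ∃ H > 0, ∀ x ∈ V, ∀ a ∈ V, ∀ b ∈ V, x ≠ b → dist x a ≤ K * dist x b →
    dist (g x) (g a) ≤ H * dist (g x) (g b)

theorem exists_forall_exists_dist_lt (E : Type*) [NormedAddCommGroup E] [NormedSpace ℝ E]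
    [ProperSpace E] (H : ℝ) {η : ℝ} (hη : 0 < η) :
    ∃ N : ℕ, ∀ (x : E) {r : ℝ}, 0 < r → ∀ p : ℕ → E, (∀ i, dist x (p i) ≤ H * r) →
      ∃ i j, i < j ∧ j ≤ N ∧ dist (p i) (p j) < η * r := by
  obtain ⟨t, -, htf, ht⟩ := (isCompact_closedBall (0 : E) H).finite_cover_balls (half_pos hη)
  lift t to Finset E using htf
  refine ⟨t.card, fun x r hr p hp => ?_⟩
  have hcover : ∀ i, ∃ y ∈ t, dist (r⁻¹ • (p i - x)) y < η / 2 := fun i => by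
    have hmem : r⁻¹ • (p i - x) ∈ closedBall (0 : E) H := by
      rw [mem_closedBall_zero_iff, norm_smul_of_nonneg (by positivity), inv_mul_le_iff₀ hr,
        mul_comm, ← dist_eq_norm, dist_comm]
      exact hp i
    simpa using ht hmem
  choose y hyt hy using hcover
  have pigeonhole : ∃ i j, i < j ∧ j ≤ t.card ∧ y i = y j := by
    obtain ⟨i, hi, j, hj, hij, hyij⟩ := Finset.exists_ne_map_eq_of_card_lt_of_maps_to
      (s := Finset.range (t.card + 1)) (t := t) (f := y) (by simp) (fun i _ => hyt i)
    rw [Finset.mem_range_succ_iff] at hi hj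
    rcases hij.lt_or_gt with hlt | hgt
    · exact ⟨i, j, hlt, hj, hyij⟩
    · exact ⟨j, i, hgt, hi, hyij.symm⟩
  obtain ⟨i, j, hij, hj, hyij⟩ := pigeonhole
  refine ⟨i, j, hij, hj, ?_⟩
  have hclose : dist (r⁻¹ • (p i - x)) (r⁻¹ • (p j - x)) < η := by
    have hyj := hy j
    rw [← hyij] at hyj
    linarith [hy i, dist_triangle_right (r⁻¹ • (p i - x)) (r⁻¹ • (p j - x)) (y i)]
  rwa [dist_smul₀, dist_sub_right, Real.norm_of_nonneg (by positivity), inv_mul_lt_iff₀ hr,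
    mul_comm] at hclose

theorem dist_le_sq_mul_dist {X Y : Type*} [MetricSpace X] [PseudoMetricSpace Y] {g : X → Y}
    {V : Set X} {H : ℝ} (hH : 0 ≤ H)
    (hg : ∀ x ∈ V, ∀ a ∈ V, ∀ b ∈ V, x ≠ b → dist x a ≤ 1 * dist x b →
      dist (g x) (g a) ≤ H * dist (g x) (g b))
    {x a p q : X} (hx : x ∈ V) (ha : a ∈ V) (hp : p ∈ V) (hq : q ∈ V) (hxp : x ≠ p)
    (hap : dist x a ≤ dist x p) (hpq : 2 * dist x p ≤ dist x q) :
    dist (g x) (g a) ≤ H ^ 2 * dist (g p) (g q) := by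
  have hpos := dist_pos.2 hxp
  have hxpq : dist p x ≤ dist p q := by
    rw [dist_comm]
    linarith [dist_triangle x p q]
  have hne : p ≠ q := dist_pos.1 (by rw [dist_comm] at hpos; exact hpos.trans_le hxpq)
  calc dist (g x) (g a)
      ≤ H * dist (g p) (g x) := by
        rw [dist_comm (g p)]
        exact hg x hx a ha p hp hxp (by rwa [one_mul])
    _ ≤ H * (H * dist (g p) (g q)) := by
        gcongr
        exact hg p hp x hx q hq hne (by rwa [one_mul])
    _ = H ^ 2 * dist (g p) (g q) := by ring

/-- If `dist x b` is much larger than `dist x a`, then there are many scales in between, and by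
`dist_le_sq_mul_dist` the images of points on these scales are separated by a fixed multiple of
`dist (g x) (g a)`; only finitely many of them fit into the ball of radius `H * dist (g x) (g b)`
around `g x`. -/
theorem IsWeaklyQuasisymmetricOn.exists_two_mul_dist_le {X E : Type*} [MetricSpace X]
    [NormedAddCommGroup E] [NormedSpace ℝ E] [ProperSpace E] {g : X → E} {V : Set X}
    (hg : IsWeaklyQuasisymmetricOn g V) (hV : ∀ x ∈ V, ∀ D ≥ 0, ∃ b ∈ V, dist x b = D) :
    ∃ M > 0, ∀ x ∈ V, ∀ a ∈ V, ∀ b ∈ V, M * dist x a ≤ dist x b →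
      2 * dist (g x) (g a) ≤ dist (g x) (g b) := by
  obtain ⟨H, hH, hgH⟩ := hg 1 one_pos
  obtain ⟨N, hN⟩ := exists_forall_exists_dist_lt E H (η := 1 / (2 * H ^ 2)) (by positivity)
  refine ⟨2 ^ N, by positivity, fun x hx a ha b hb hab => ?_⟩
  rcases eq_or_ne x a with rfl | hxa
  · simp
  have hD : 0 < dist x b := (mul_pos (by positivity) (dist_pos.2 hxa)).trans_le hab
  choose p hpV hp using fun i : ℕ => hV x hx (dist x b / 2 ^ i) (by positivity)
  have hxp : ∀ i, x ≠ p i := fun i => dist_pos.1 (by rw [hp]; positivity)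
  have hpN : ∀ j ≤ N, dist x a ≤ dist x (p j) := fun j hj => by
    rw [hp, le_div_iff₀ (by positivity), mul_comm]
    exact (mul_le_mul_of_nonneg_right (pow_le_pow_right₀ one_le_two hj) dist_nonneg).trans hab
  have hpb : ∀ i, dist x (p i) ≤ 1 * dist x b := fun i => by
    rw [hp, one_mul]
    exact div_le_self hD.le (one_le_pow₀ one_le_two)
  have hscale : ∀ {i j}, i < j → 2 * dist x (p j) ≤ dist x (p i) := fun {i j} hij => by
    rw [hp, hp, ← mul_div_assoc, div_le_div_iff₀ (by positivity) (by positivity), mul_right_comm,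
      ← pow_succ', mul_comm]
    exact mul_le_mul_of_nonneg_left (pow_le_pow_right₀ one_le_two hij) hD.le
  have hgb : ∀ c ∈ V, dist x c ≤ 1 * dist x b → dist (g x) (g c) ≤ H * dist (g x) (g b) :=
    fun c hc => hgH x hx c hc b hb (dist_pos.1 hD)
  rcases (dist_nonneg : 0 ≤ dist (g x) (g b)).eq_or_lt with hzero | hpos
  · have := hgb a ha ((hpN 0 N.zero_le).trans (hpb 0))
    rw [← hzero] at this ⊢
    linarith
  obtain ⟨i, j, hij, hjN, hclose⟩ := hN (g x) hpos (fun i => g (p i)) fun i => hgb _ (hpV i) (hpb i)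
  calc 2 * dist (g x) (g a)
      ≤ 2 * (H ^ 2 * dist (g (p i)) (g (p j))) := by
        rw [dist_comm (g (p i))]
        gcongr
        exact dist_le_sq_mul_dist hH.le hgH hx ha (hpV j) (hpV i) (hxp j) (hpN j hjN) (hscale hij)
    _ ≤ 2 * (H ^ 2 * (1 / (2 * H ^ 2) * dist (g x) (g b))) := by gcongr
    _ = dist (g x) (g b) := by field_simp

theorem exists_norm_eq_add_dist_eq {E : Type*} [NormedAddCommGroup E] [NormedSpace ℝ E] {x : E}
    (hx : x ≠ 0) {D : ℝ} (hD : 0 ≤ D) : ∃ y, ‖y‖ = ‖x‖ + D ∧ dist x y = D := by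
  have hnorm : ‖(D / ‖x‖) • x‖ = D := by
    rw [norm_smul_of_nonneg (by positivity), div_mul_cancel₀ _ (norm_ne_zero_iff.2 hx)]
  refine ⟨x + (D / ‖x‖) • x, ?_, by rw [dist_self_add_right, hnorm]⟩
  rw [(SameRay.sameRay_nonneg_smul_right x (by positivity)).norm_add, hnorm]

theorem exists_mem_extDisk_dist_eq {x : ℂ} (hx : x ∈ extDisk) {D : ℝ} (hD : 0 ≤ D) :
    ∃ y ∈ extDisk, dist x y = D := by
  have hx1 : 1 < ‖x‖ := hx
  obtain ⟨y, hy, hxy⟩ := exists_norm_eq_add_dist_eq (norm_pos_iff.1 (one_pos.trans hx1)) hD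
  exact ⟨y, lt_of_lt_of_eq (lt_add_of_lt_of_nonneg hx1 hD) hy.symm, hxy⟩

/-! ### Quasisymmetry of the inverse of the exterior conformal map -/

section Annulus

variable {E : Type*} [NormedAddCommGroup E] [InnerProductSpace ℝ E]

theorem half_dist_sq_add_le_dist_midpoint_sq {a b x : E} (h : dist a x ≤ dist a b) :
    (dist a x / 2) ^ 2 + dist x b ^ 2 / 2 ≤ dist b (midpoint ℝ a x) ^ 2 := by
  have apollonius :=
    EuclideanGeometry.dist_sq_add_dist_sq_eq_two_mul_dist_midpoint_sq_add_half_dist_sq b a x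
  have hsq := pow_le_pow_left₀ dist_nonneg h 2
  rw [dist_comm b a, dist_comm b x] at apollonius
  linarith

theorem sqrt_mul_le_of_sq_add_le {K d r₁ r₂ : ℝ} (hK : 0 < K) (hr₁ : 0 ≤ r₁) (hr₂ : 0 ≤ r₂)
    (hd : 2 * r₁ ≤ K * d) (h : r₁ ^ 2 + d ^ 2 / 2 ≤ r₂ ^ 2) : √(1 + 2 / K ^ 2) * r₁ ≤ r₂ := by
  refine le_of_sq_le_sq ?_ hr₂
  have hsq : 2 / K ^ 2 * r₁ ^ 2 ≤ d ^ 2 / 2 := by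
    rw [div_mul_eq_mul_div, div_le_iff₀ (by positivity)]
    linarith [pow_le_pow_left₀ (by positivity) hd 2]
  rw [mul_pow, Real.sq_sqrt (by positivity)]
  linarith

theorem exists_annulus {K : ℝ} (hK : 0 < K) :
    ∃ τ > 0, ∀ x a b : E, x ≠ b → dist x a ≤ K * dist x b →
      ∃ (c : E) (r₁ r₂ : ℝ), 0 ≤ r₁ ∧ 0 < r₂ ∧ τ * r₂ ≤ r₂ - r₁ ∧ dist a c ≤ r₁ ∧
        min (dist x c) (dist b c) ≤ r₁ ∧ r₂ ≤ max (dist x c) (dist b c) := by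
  have hone : 1 < √(1 + 2 / K ^ 2) :=
    Real.lt_sqrt_of_sq_lt (by rw [one_pow]; exact lt_add_of_pos_right 1 (by positivity))
  refine ⟨1 - 1 / √(1 + 2 / K ^ 2), sub_pos.2 ((div_lt_one (by positivity)).2 hone),
    fun x a b hxb hK' => ?_⟩
  have hd := dist_pos.2 hxb
  have radii : ∀ {r₁ r₂ : ℝ}, 0 ≤ r₁ → 0 ≤ r₂ → 2 * r₁ ≤ K * dist x b →
      r₁ ^ 2 + dist x b ^ 2 / 2 ≤ r₂ ^ 2 →
      0 < r₂ ∧ (1 - 1 / √(1 + 2 / K ^ 2)) * r₂ ≤ r₂ - r₁ := fun {r₁ r₂} hr₁ hr₂ hle h => by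
    refine ⟨(sq_pos_iff.1 (lt_of_lt_of_le (by positivity) h)).lt_of_le' hr₂, ?_⟩
    have hdiv : r₁ ≤ r₂ / √(1 + 2 / K ^ 2) := by
      rw [le_div_iff₀' (by positivity)]
      exact sqrt_mul_le_of_sq_add_le hK hr₁ hr₂ hle h
    rw [sub_mul, one_mul, one_div_mul_eq_div]
    linarith
  rw [dist_comm] at hK'
  rcases le_total (dist a x) (dist a b) with hle | hle
  · obtain ⟨hr₂, hτ⟩ := radii (r₁ := dist a x / 2) (by positivity) dist_nonneg (by linarith)
      (half_dist_sq_add_le_dist_midpoint_sq hle)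
    exact ⟨midpoint ℝ a x, _, _, by positivity, hr₂, hτ,
      by simp [dist_left_midpoint, div_eq_inv_mul],
      min_le_of_left_le (by simp [dist_right_midpoint, div_eq_inv_mul]), le_max_right _ _⟩
  · have hmid := half_dist_sq_add_le_dist_midpoint_sq hle
    rw [dist_comm b x] at hmid
    obtain ⟨hr₂, hτ⟩ := radii (r₁ := dist a b / 2) (by positivity) dist_nonneg (by linarith) hmid
    exact ⟨midpoint ℝ a b, _, _, by positivity, hr₂, hτ,
      by simp [dist_left_midpoint, div_eq_inv_mul],
      min_le_of_right_le (by simp [dist_right_midpoint, div_eq_inv_mul]), le_max_left _ _⟩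

end Annulus

theorem IsLinearlyLocallyConnected.pos {X : Type*} [PseudoMetricSpace X] {U : Set X} {κ : ℝ}
    (h : IsLinearlyLocallyConnected U κ) (hU : U.Nonempty) : 0 < κ := by
  obtain ⟨a, ha⟩ := hU
  obtain ⟨F, -, -, haF, -, hF⟩ := h.exists_subset_ball (p := a) one_pos ha ha
    (by rw [dist_self]; exact one_pos) (by rw [dist_self]; exact one_pos)
  simpa using hF a haF

theorem exists_dist_eq_of_isPreconnected {X : Type*} [PseudoMetricSpace X] {F : Set X}
    (hF : IsPreconnected F) {u v c : X} (hu : u ∈ F) (hv : v ∈ F) {r : ℝ}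
    (hmin : min (dist u c) (dist v c) ≤ r) (hmax : r ≤ max (dist u c) (dist v c)) :
    ∃ w ∈ F, dist w c = r :=
  (hF.image (fun w => dist w c) (by fun_prop)).ordConnected.uIcc_subset
    (mem_image_of_mem _ hu) (mem_image_of_mem _ hv) ⟨hmin, hmax⟩

theorem exists_lt_sq_logLog_sub_mul {τ : ℝ} (hτ : 0 < τ) (A : ℝ) :
    ∃ T ≥ 1, ∀ s ≥ T, A < (logLog s - logLog 1) ^ 2 * τ := by
  obtain ⟨T, hT, hT₁⟩ := ((tendsto_logLog.eventually_gt_atTop (logLog 1 + √(A / τ))).and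
    (eventually_ge_atTop 1)).exists
  refine ⟨T, hT₁, fun s hs => ?_⟩
  rw [← div_lt_iff₀ hτ]
  refine Real.lt_sq_of_sqrt_lt ?_
  linarith [logLog_le_logLog (zero_le_one.trans hT₁) hs]

namespace IsExtConformal

variable {Ω : Set ℂ} {Φ : ℂ → ℂ} {κ : ℝ} {x a b c : ℂ} {r r₁ r₂ R S : ℝ}

theorem exists_extParam_mem_dist_eq (h : IsExtConformal Ω Φ) {F : Set ℂ} (hFΩ : F ⊆ Ω)
    (hF : IsPreconnected F) (ha : a ∈ extDisk) (hb : b ∈ extDisk) (haF : extParam Ω Φ a ∈ F)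
    (hbF : extParam Ω Φ b ∈ F) (hmin : min (dist a c) (dist b c) ≤ r)
    (hmax : r ≤ max (dist a c) (dist b c)) :
    ∃ u ∈ extDisk, extParam Ω Φ u ∈ F ∧ dist u c = r := by
  obtain ⟨-, ⟨z, hz, rfl⟩, hzr⟩ := exists_dist_eq_of_isPreconnected
    (hF.image Φ (h.1.continuousOn.mono hFΩ)) ⟨_, haF, h.apply_extParam ha⟩
    ⟨_, hbF, h.apply_extParam hb⟩ hmin hmax
  exact ⟨Φ z, h.2.1.mapsTo (hFΩ hz), by rwa [h.extParam_apply (hFΩ hz)], hzr⟩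

theorem exists_le_dist_lt_dist_extParam (h : IsExtConformal Ω Φ) (hΩ : IsOpen Ω)
    (hΩc : Ω ∈ cobounded ℂ) (c q : ℂ) (r R : ℝ) :
    ∃ y ∈ extDisk, r ≤ dist y c ∧ R < dist (extParam Ω Φ y) q := by
  obtain ⟨M, hM, hlarge⟩ := h.exists_forall_lt_norm_extParam hΩ hΩc (‖q‖ + R)
  obtain ⟨y, hy, hyM⟩ : ∃ y : ℂ, ‖c‖ + r ≤ ‖y‖ ∧ M < ‖y‖ :=
    ((tendsto_norm_cobounded_atTop.eventually_ge_atTop (‖c‖ + r)).and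
      (tendsto_norm_cobounded_atTop.eventually_gt_atTop M)).exists
  refine ⟨y, hM.trans_lt hyM, ?_, ?_⟩ <;> rw [dist_eq_norm]
  · linarith [norm_sub_norm_le y c]
  · linarith [norm_sub_norm_le (extParam Ω Φ y) q, hlarge y hyM]

theorem exists_dist_eq_dist_extParam_le (h : IsExtConformal Ω Φ)
    (hκ : IsLinearlyLocallyConnected Ω κ) (hx : x ∈ extDisk) (hb : b ∈ extDisk) (hR : 0 < R)
    (hxb : dist (extParam Ω Φ b) (extParam Ω Φ x) < R) (hmin : min (dist x c) (dist b c) ≤ r)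
    (hmax : r ≤ max (dist x c) (dist b c)) :
    ∃ u ∈ extDisk, dist u c = r ∧ dist (extParam Ω Φ u) (extParam Ω Φ x) ≤ κ * R := by
  obtain ⟨F, hFΩ, hF, hxF, hbF, hFR⟩ := hκ.exists_subset_ball hR (h.bijOn_extParam.mapsTo hx)
    (h.bijOn_extParam.mapsTo hb) (by rwa [dist_self]) hxb
  obtain ⟨u, hu, huF, hur⟩ := h.exists_extParam_mem_dist_eq hFΩ hF hx hb hxF hbF hmin hmax
  exact ⟨u, hu, hur, (hFR _ huF).le⟩

theorem exists_dist_eq_le_dist_extParam (h : IsExtConformal Ω Φ) (hΩ : IsOpen Ω)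
    (hΩc : Ω ∈ cobounded ℂ) (hκ : IsLinearlyLocallyConnected Ω κ) {q : ℂ} (ha : a ∈ extDisk)
    (hS : 0 < S) (hqa : κ * S < dist (extParam Ω Φ a) q) (hac : dist a c ≤ r) :
    ∃ v ∈ extDisk, dist v c = r ∧ S ≤ dist (extParam Ω Φ v) q := by
  obtain ⟨y, hy, hyr, hyS⟩ := h.exists_le_dist_lt_dist_extParam hΩ hΩc c q r (κ * S)
  obtain ⟨F, hFΩ, hF, haF, hyF, hFS⟩ := hκ.exists_disjoint_closedBall hS
    (h.bijOn_extParam.mapsTo ha) (h.bijOn_extParam.mapsTo hy) hqa hyS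
  obtain ⟨v, hv, hvF, hvr⟩ := h.exists_extParam_mem_dist_eq hFΩ hF ha hy haF hyF
    (min_le_of_left_le hac) (le_max_of_le_right hyr)
  exact ⟨v, hv, hvr, (hFS _ hvF).le⟩

/-- Every circle of an annulus separating `x` and `a` from `b`, or `b` and `a` from `x`, meets the
preimages of the disk of radius `κ * R` and of the complement of the disk of radius `S` around
`extParam Ω Φ x`. -/
theorem sq_logLog_sub_mul_sub_le (h : IsExtConformal Ω Φ) (hΩ : IsOpen Ω) (hΩc : Ω ∈ cobounded ℂ)
    (hκ : IsLinearlyLocallyConnected Ω κ) (hx : x ∈ extDisk) (ha : a ∈ extDisk) (hb : b ∈ extDisk)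
    (hR : 0 < κ * R) (hRS : κ * R ≤ S) (hxb : dist (extParam Ω Φ b) (extParam Ω Φ x) < R)
    (hxa : κ * S < dist (extParam Ω Φ a) (extParam Ω Φ x)) (hr₁ : 0 ≤ r₁) (hr : r₁ < r₂)
    (hac : dist a c ≤ r₁) (hmin : min (dist x c) (dist b c) ≤ r₁)
    (hmax : r₂ ≤ max (dist x c) (dist b c)) :
    (logLog (S / (κ * R)) - logLog 1) ^ 2 * (r₂ - r₁) ≤ 8 * Real.pi ^ 2 * r₂ := by
  refine sq_mul_sub_le_of_forall_dist_le (h.differentiableOn_extParam hΩ)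
    h.bijOn_extParam.injOn (c := c) (q := extParam Ω Φ x) hr₁ hr hR hRS fun r hr' => ?_
  obtain ⟨u, hu, hur, huR⟩ := h.exists_dist_eq_dist_extParam_le hκ hx hb
    (dist_nonneg.trans_lt hxb) hxb (hmin.trans hr'.1.le) (hr'.2.le.trans hmax)
  obtain ⟨v, hv, hvr, hvS⟩ := h.exists_dist_eq_le_dist_extParam hΩ hΩc hκ ha (hR.trans_le hRS) hxa
    (hac.trans hr'.1.le)
  exact ⟨u, hu, v, hv, hur, hvr, huR, hvS⟩

theorem isWeaklyQuasisymmetricOn_extParam (h : IsExtConformal Ω Φ) (hΩ : IsOpen Ω)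
    (hΩc : Ω ∈ cobounded ℂ) (hκ : IsLinearlyLocallyConnected Ω κ) :
    IsWeaklyQuasisymmetricOn (extParam Ω Φ) extDisk := by
  intro K hK
  obtain ⟨τ, hτ, hannulus⟩ := exists_annulus (E := ℂ) hK
  obtain ⟨T, hT₁, hT⟩ := exists_lt_sq_logLog_sub_mul hτ (8 * Real.pi ^ 2)
  have hκ0 : 0 < κ := hκ.pos (nonempty_of_mem hΩc)
  have : 0 < T := one_pos.trans_le hT₁
  refine ⟨T * (4 * κ ^ 2), by positivity, fun x hx a ha b hb hxb hxab => ?_⟩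
  by_contra! hlt
  have hdb : 0 < dist (extParam Ω Φ x) (extParam Ω Φ b) :=
    dist_pos.2 (h.bijOn_extParam.injOn.ne hx hb hxb)
  have hda : 0 < dist (extParam Ω Φ x) (extParam Ω Φ a) := lt_trans (by positivity) hlt
  obtain ⟨R, hR⟩ : ∃ R, R = 2 * dist (extParam Ω Φ x) (extParam Ω Φ b) := ⟨_, rfl⟩
  obtain ⟨S, hS⟩ : ∃ S, S = dist (extParam Ω Φ x) (extParam Ω Φ a) / (2 * κ) := ⟨_, rfl⟩
  have hR0 : 0 < κ * R := by
    rw [hR]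
    positivity
  have hTS : T ≤ S / (κ * R) := by
    rw [le_div_iff₀ hR0, hS, hR, le_div_iff₀ (by positivity)]
    linarith
  have hxa : κ * S < dist (extParam Ω Φ a) (extParam Ω Φ x) := by
    have : κ * S = dist (extParam Ω Φ x) (extParam Ω Φ a) / 2 := by
      rw [hS]
      field_simp
    rw [dist_comm]
    linarith
  obtain ⟨c, r₁, r₂, hr₁, hr₂, hτr, hac, hmin, hmax⟩ := hannulus x a b hxb hxab
  have hlengthArea := h.sq_logLog_sub_mul_sub_le hΩ hΩc hκ hx ha hb hR0
    ((one_le_div hR0).1 (hT₁.le.trans hTS)) (by rw [dist_comm]; linarith) hxa hr₁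
    (by linarith [mul_pos hτ hr₂]) hac hmin hmax
  have := mul_lt_mul_of_pos_right (hT _ hTS) hr₂
  linarith [mul_le_mul_of_nonneg_left hτr (sq_nonneg (logLog (S / (κ * R)) - logLog 1))]

/-! ### Comparability of the distances to a level curve -/

section LevelCurve

variable {δ H M : ℝ} {u v z ζ : ℂ}

theorem exists_mem_levelCurve_dist_le (h : IsExtConformal Ω Φ) (hδ : 0 < δ) (hu : u ∈ extDisk)
    (huδ : ‖u‖ < 1 + δ) :
    ∃ y ∈ extDisk, extParam Ω Φ y ∈ levelCurve Ω Φ δ ∧ dist u y ≤ δ := by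
  have hu1 : 1 < ‖u‖ := hu
  obtain ⟨y, hy, huy⟩ := exists_norm_eq_add_dist_eq (norm_pos_iff.1 (one_pos.trans hu1))
    (sub_nonneg.2 huδ.le)
  rw [add_sub_cancel] at hy
  refine ⟨y, ?_, ?_, by linarith⟩
  · change 1 < ‖y‖
    linarith
  · rw [h.levelCurve_eq_image hδ]
    exact mem_image_of_mem _ (mem_sphere_zero_iff_norm.2 hy)

/-- If `dist u v` were large, the point of the level curve above `u` would be too close to `z`. -/
theorem dist_lt_mul_of_dist_extParam_le (h : IsExtConformal Ω Φ) (hΩ : IsOpen Ω) (hM : 0 ≤ M)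
    (hhalf : ∀ x ∈ extDisk, ∀ a ∈ extDisk, ∀ b ∈ extDisk, M * dist x a ≤ dist x b →
      2 * dist (extParam Ω Φ x) (extParam Ω Φ a) ≤ dist (extParam Ω Φ x) (extParam Ω Φ b))
    (hδ : 0 < δ) (hz : z ∉ Ω) (hu : u ∈ extDisk) (hv : v ∈ extDisk) (huδ : ‖u‖ < 1 + δ)
    (huz : dist (extParam Ω Φ u) z ≤ rho Ω Φ δ z / 8)
    (huv : dist (extParam Ω Φ u) (extParam Ω Φ v) ≤ 5 / 4 * rho Ω Φ δ z) :
    dist u v < M * δ := by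
  by_contra! hle
  obtain ⟨y, hy, hyδ, huy⟩ := h.exists_mem_levelCurve_dist_le hδ hu huδ
  have hclose := hhalf u hu y hy v hv ((mul_le_mul_of_nonneg_left huy hM).trans hle)
  have hzy : rho Ω Φ δ z ≤ dist z (extParam Ω Φ y) := infDist_le_dist_of_mem hyδ
  have hpos := h.rho_pos hΩ hδ hz
  have htriangle := dist_triangle z (extParam Ω Φ u) (extParam Ω Φ y)
  rw [dist_comm z (extParam Ω Φ u)] at htriangle
  linarith

theorem exists_mem_extDisk_dist_extParam_eq_rho (h : IsExtConformal Ω Φ) (hΩ : IsOpen Ω)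
    (hδ : 0 < δ) (z : ℂ) : ∃ p ∈ extDisk, ‖p‖ = 1 + δ ∧ dist z (extParam Ω Φ p) = rho Ω Φ δ z := by
  obtain ⟨_, ⟨hp, hpδ⟩, hzp⟩ :=
    (h.isCompact_levelCurve hΩ hδ).exists_infDist_eq_dist (h.levelCurve_nonempty hδ) z
  exact ⟨_, h.2.1.mapsTo hp, hpδ, by rw [h.extParam_apply hp]; exact hzp.symm⟩

theorem rho_le_mul_rho_of_dist_le (h : IsExtConformal Ω Φ) (hΩ : IsOpen Ω) (hH : 0 ≤ H)
    (hqs : ∀ x ∈ extDisk, ∀ a ∈ extDisk, ∀ b ∈ extDisk, x ≠ b → dist x a ≤ 2 * M * dist x b →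
      dist (extParam Ω Φ x) (extParam Ω Φ a) ≤ H * dist (extParam Ω Φ x) (extParam Ω Φ b))
    (hδ : 0 < δ) (hu : u ∈ extDisk) (hv : v ∈ extDisk) (hvδ : ‖v‖ < 1 + δ / 2)
    (huv : dist u v ≤ M * δ) (huz : dist (extParam Ω Φ u) z ≤ rho Ω Φ δ ζ)
    (hvζ : dist (extParam Ω Φ v) ζ ≤ rho Ω Φ δ ζ) :
    rho Ω Φ δ z ≤ (3 + 2 * H) * rho Ω Φ δ ζ := by
  obtain ⟨p, hp, hpδ, hζp⟩ := h.exists_mem_extDisk_dist_extParam_eq_rho hΩ hδ ζ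
  have hvp : δ / 2 < dist v p := by
    rw [dist_comm, dist_eq_norm]
    linarith [norm_sub_norm_le p v]
  have hM : 0 ≤ M := nonneg_of_mul_nonneg_left (dist_nonneg.trans huv) hδ
  have hvu : dist (extParam Ω Φ v) (extParam Ω Φ u) ≤
      H * dist (extParam Ω Φ v) (extParam Ω Φ p) := by
    refine hqs v hv u hu p hp (dist_pos.1 ((half_pos hδ).trans hvp)) ?_
    rw [dist_comm]
    linarith [mul_le_mul_of_nonneg_left hvp.le hM]
  have hvpζ : dist (extParam Ω Φ v) (extParam Ω Φ p) ≤ 2 * rho Ω Φ δ ζ := by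
    linarith [dist_triangle (extParam Ω Φ v) ζ (extParam Ω Φ p)]
  have hzζ : dist z ζ ≤ 2 * rho Ω Φ δ ζ + H * (2 * rho Ω Φ δ ζ) := by
    have htriangle := dist_triangle4_right z ζ (extParam Ω Φ u) (extParam Ω Φ v)
    rw [dist_comm z (extParam Ω Φ u), dist_comm ζ (extParam Ω Φ v),
      dist_comm (extParam Ω Φ u) (extParam Ω Φ v)] at htriangle
    linarith [mul_le_mul_of_nonneg_left hvpζ hH]
  have hlip : rho Ω Φ δ z ≤ rho Ω Φ δ ζ + dist z ζ := infDist_le_infDist_add_dist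
  linarith

theorem exists_rho_le_mul_rho (h : IsExtConformal Ω Φ) (hΩ : IsOpen Ω) (hΩc : Ω ∈ cobounded ℂ)
    (hκ : IsLinearlyLocallyConnected Ω κ) :
    ∃ C > 0, ∀ δ > 0, ∀ z ∈ frontier Ω, ∀ ζ ∈ frontier Ω, dist ζ z ≤ rho Ω Φ δ z →
      rho Ω Φ δ z ≤ C * rho Ω Φ δ ζ := by
  have hqs := h.isWeaklyQuasisymmetricOn_extParam hΩ hΩc hκ
  obtain ⟨M, hM, hhalf⟩ := hqs.exists_two_mul_dist_le fun x hx D hD =>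
    exists_mem_extDisk_dist_eq hx hD
  obtain ⟨H, hH, hqsH⟩ := hqs (2 * M) (by positivity)
  refine ⟨3 + 2 * H, by positivity, fun δ hδ z hz ζ hζ hle => ?_⟩
  have notMem : ∀ {z}, z ∈ frontier Ω → z ∉ Ω := fun hz => (hΩ.frontier_eq ▸ hz).2
  have hz0 := h.rho_pos hΩ hδ (notMem hz)
  have hζ0 := h.rho_pos hΩ hδ (notMem hζ)
  obtain ⟨ε, hε, hεz, hεζ⟩ : ∃ ε > 0, ε ≤ rho Ω Φ δ z / 8 ∧ ε ≤ rho Ω Φ δ ζ :=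
    ⟨min _ _, lt_min (by positivity) hζ0, min_le_left _ _, min_le_right _ _⟩
  obtain ⟨u, hu, huδ, huz⟩ := h.exists_dist_extParam_lt hΩ hΩc hz hε
    (lt_add_of_pos_right 1 hδ)
  obtain ⟨v, hv, hvδ, hvζ⟩ := h.exists_dist_extParam_lt hΩ hΩc hζ hε
    (lt_add_of_pos_right 1 (half_pos hδ))
  have huv : dist u v < M * δ := by
    refine h.dist_lt_mul_of_dist_extParam_le hΩ hM.le hhalf hδ (notMem hz) hu hv huδ
      (huz.le.trans hεz) ?_
    have := dist_triangle4_right (extParam Ω Φ u) (extParam Ω Φ v) z ζ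
    rw [dist_comm z ζ] at this
    linarith
  exact h.rho_le_mul_rho_of_dist_le hΩ hH.le hqsH hδ hu hv hvδ huv.le (huz.le.trans hεζ)
    (hvζ.le.trans hεζ)

end LevelCurve

end IsExtConformal

/-! ### Integrals of functions with power decay -/

section PowerDecay

variable {X : Type*} [MeasurableSpace X] {s : Set X} {ζ : X} {g : X → ℝ} {a m x t A B R ρ : ℝ}

theorem exists_le_two_pow_le_mul_rpow (ha : 0 ≤ a) (hB : 0 ≤ B) (hx : x ≤ B)
    (hxt : x * t ^ a ≤ B) : ∃ k : ℕ, t ≤ 2 ^ k ∧ x ≤ B * (2 / 2 ^ k) ^ a := by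
  rcases le_or_gt t 1 with ht | ht
  · refine ⟨0, by simpa using ht, hx.trans (le_mul_of_one_le_right hB ?_)⟩
    exact Real.one_le_rpow (by norm_num) ha
  obtain ⟨k, hkt, htk⟩ := exists_nat_pow_near ht.le one_lt_two
  refine ⟨k + 1, htk.le, ?_⟩
  have hk : (0 : ℝ) < 2 ^ k := by positivity
  rw [pow_succ, div_mul_cancel_right₀ two_ne_zero, Real.inv_rpow hk.le, ← div_eq_mul_inv,
    le_div_iff₀ (by positivity)]
  rcases le_total x 0 with hx0 | hx0
  · exact (mul_nonpos_of_nonpos_of_nonneg hx0 (by positivity)).trans hB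
  · exact le_trans (by gcongr) hxt

theorem setLIntegral_le_of_rpow_decay [PseudoMetricSpace X] {μ : Measure X} (ha : 1 < a)
    (hA : 0 ≤ A) (hμ : ∀ R > 0, μ (s ∩ closedBall ζ R) ≤ ENNReal.ofReal (A * R)) (hρ : 0 < ρ)
    (hB : 0 ≤ B) (hg : ∀ z ∈ s, g z ≤ B) (hdecay : ∀ z ∈ s, g z * dist z ζ ^ a ≤ B * ρ ^ a) :
    ∫⁻ z in s, ENNReal.ofReal (g z) ∂μ ≤
      ENNReal.ofReal (A * B * 2 ^ a * (1 - 2 ^ (1 - a))⁻¹ * ρ) := by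
  let E (k : ℕ) : Set X := {z ∈ s ∩ closedBall ζ (2 ^ k * ρ) | g z ≤ B * (2 / 2 ^ k) ^ a}
  have hcover : s ⊆ ⋃ k, E k := fun z hz => by
    have hscaled : g z * (dist z ζ / ρ) ^ a ≤ B := by
      rw [Real.div_rpow dist_nonneg hρ.le, ← mul_div_assoc, div_le_iff₀ (by positivity)]
      exact hdecay z hz
    obtain ⟨k, hk, hgk⟩ := exists_le_two_pow_le_mul_rpow (by linarith) hB (hg z hz) hscaled
    exact mem_iUnion.2 ⟨k, ⟨hz, (div_le_iff₀ hρ).1 hk⟩, hgk⟩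
  have hq : (2 : ℝ) ^ (1 - a) < 1 := Real.rpow_lt_one_of_one_lt_of_neg one_lt_two (by linarith)
  have hE (k : ℕ) : ∫⁻ z in E k, ENNReal.ofReal (g z) ∂μ ≤
      ENNReal.ofReal (A * B * 2 ^ a * ρ * (2 ^ (1 - a)) ^ k) :=
    calc ∫⁻ z in E k, ENNReal.ofReal (g z) ∂μ
        ≤ ∫⁻ _ in E k, ENNReal.ofReal (B * (2 / 2 ^ k) ^ a) ∂μ :=
          setLIntegral_mono measurable_const fun z hz => ENNReal.ofReal_le_ofReal hz.2
      _ ≤ ENNReal.ofReal (B * (2 / 2 ^ k) ^ a) * ENNReal.ofReal (A * (2 ^ k * ρ)) := by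
          rw [setLIntegral_const]
          gcongr
          exact (measure_mono fun z hz => hz.1).trans (hμ _ (by positivity))
      _ = ENNReal.ofReal (A * B * 2 ^ a * ρ * (2 ^ (1 - a)) ^ k) := by
          rw [← ENNReal.ofReal_mul (by positivity), Real.rpow_sub two_pos, Real.rpow_one, div_pow,
            Real.div_rpow two_pos.le (by positivity), Real.rpow_pow_comm two_pos.le]
          congr 1
          ring
  calc ∫⁻ z in s, ENNReal.ofReal (g z) ∂μ ≤ ∫⁻ z in ⋃ k, E k, ENNReal.ofReal (g z) ∂μ :=
        lintegral_mono_set hcover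
    _ ≤ ∑' k, ∫⁻ z in E k, ENNReal.ofReal (g z) ∂μ := lintegral_iUnion_le _ _
    _ ≤ ∑' k, ENNReal.ofReal (A * B * 2 ^ a * ρ * (2 ^ (1 - a)) ^ k) := ENNReal.tsum_le_tsum hE
    _ = ENNReal.ofReal (A * B * 2 ^ a * (1 - 2 ^ (1 - a))⁻¹ * ρ) := by
        rw [← ENNReal.ofReal_tsum_of_nonneg (fun k => by positivity)
          ((summable_geometric_of_lt_one (by positivity) hq).mul_left _), tsum_mul_left,
          tsum_geometric_of_lt_one (by positivity) hq, mul_right_comm]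

theorem ofReal_mul_le_setLIntegral_hausdorffMeasure [MetricSpace X] [BorelSpace X]
    (hs : IsPreconnected s) (hsm : MeasurableSet s) (hζ : ζ ∈ s) (hR : ∃ x ∈ s, R ≤ dist x ζ)
    (hm : 0 ≤ m) (hg : ∀ z ∈ s, dist z ζ ≤ R → m ≤ g z) :
    ENNReal.ofReal (m * R) ≤ ∫⁻ z in s, ENNReal.ofReal (g z) ∂μH[1] := by
  obtain ⟨x, hx, hR⟩ := hR
  calc ENNReal.ofReal (m * R) = ENNReal.ofReal m * ENNReal.ofReal R := ENNReal.ofReal_mul hm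
    _ ≤ ENNReal.ofReal m * μH[1] (s ∩ closedBall ζ R) := by
        gcongr
        exact ofReal_le_hausdorffMeasure_inter_closedBall hs hζ hx hR
    _ = ∫⁻ _ in s ∩ closedBall ζ R, ENNReal.ofReal m ∂μH[1] := (setLIntegral_const _ _).symm
    _ ≤ ∫⁻ z in s ∩ closedBall ζ R, ENNReal.ofReal (g z) ∂μH[1] :=
        setLIntegral_mono' (hsm.inter isClosed_closedBall.measurableSet) fun z hz =>
          ENNReal.ofReal_le_ofReal (hg z hz.1 hz.2)
    _ ≤ ∫⁻ z in s, ENNReal.ofReal (g z) ∂μH[1] := lintegral_mono_set inter_subset_left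

end PowerDecay

/-! ### Kernels on a quasismooth curve -/

theorem le_and_mul_sq_le_of_near_of_far {x t d d' C c₃ c₄ : ℝ} (ht : 0 ≤ t) (hd' : 0 < d')
    (hc₃ : 0 ≤ c₃) (hc₄ : 0 ≤ c₄) (hlip : d' ≤ d + t) (hcomp : t ≤ d → d ≤ C * d')
    (hnear : t ≤ d → x ≤ c₃) (hfar : d < t → x ≤ c₄ * (d' / t) ^ 2) :
    x ≤ c₃ * (1 + C ^ 2) + 4 * c₄ ∧
      x * t ^ 2 ≤ (c₃ * (1 + C ^ 2) + 4 * c₄) * d' ^ 2 := by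
  have hC : 0 ≤ c₃ * C ^ 2 := by positivity
  rcases le_or_gt t d with htd | htd
  · refine ⟨by linarith [hnear htd], ?_⟩
    calc x * t ^ 2 ≤ c₃ * (C * d') ^ 2 := by
          gcongr
          exacts [hnear htd, htd.trans (hcomp htd)]
      _ = c₃ * C ^ 2 * d' ^ 2 := by ring
      _ ≤ (c₃ * (1 + C ^ 2) + 4 * c₄) * d' ^ 2 := by
          gcongr
          linarith
  · have ht0 : 0 < t := by linarith
    have hratio : d' / t ≤ 2 := (div_le_iff₀ ht0).2 (by linarith)
    constructor
    · calc x ≤ c₄ * (d' / t) ^ 2 := hfar htd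
        _ ≤ c₄ * 2 ^ 2 := by gcongr
        _ ≤ c₃ * (1 + C ^ 2) + 4 * c₄ := by linarith
    · calc x * t ^ 2 ≤ c₄ * (d' / t) ^ 2 * t ^ 2 := by
            gcongr
            exact hfar htd
        _ = c₄ * d' ^ 2 := by
            rw [div_pow, mul_assoc, div_mul_cancel₀ _ (by positivity)]
        _ ≤ (c₃ * (1 + C ^ 2) + 4 * c₄) * d' ^ 2 := by
            gcongr
            linarith

section Kernel

variable {Γ : Set ℂ} {Λ c₃ c₄ r : ℝ} {Φ : ℂ → ℂ}

theorem IsJordanCurve.exists_pos_forall_exists_le_dist (hΓ : IsJordanCurve Γ) :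
    ∃ D > 0, ∀ ζ : ℂ, ∃ w ∈ Γ, D ≤ dist w ζ := by
  obtain ⟨γ, -, hγ, rfl⟩ := hΓ
  have hone : (1 : ℂ) ∈ sphere (0 : ℂ) 1 := by simp
  have hneg : (-1 : ℂ) ∈ sphere (0 : ℂ) 1 := by simp
  refine ⟨dist (γ 1) (γ (-1)) / 2, half_pos (dist_pos.2 (hγ.ne hone hneg (by norm_num))),
    fun ζ => ?_⟩
  by_contra! hnear
  linarith [hnear _ (mem_image_of_mem γ hone), hnear _ (mem_image_of_mem γ hneg),
    dist_triangle_right (γ 1) (γ (-1)) ζ]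

theorem IsQuasismooth.exists_rho_le_mul_rho (hΓq : IsQuasismooth Γ Λ) (hΓ : IsJordanCurve Γ)
    (hΦ : IsExtConformal (unboundedComponent Γ) Φ) :
    ∃ C > 0, ∀ δ > 0, ∀ z ∈ Γ, ∀ ζ ∈ Γ, dist ζ z ≤ rho (unboundedComponent Γ) Φ δ z →
      rho (unboundedComponent Γ) Φ δ z ≤ C * rho (unboundedComponent Γ) Φ δ ζ := by
  have hΩ := isOpen_unboundedComponent hΓ.isCompact
  have hfrontier : Γ ⊆ frontier (unboundedComponent Γ) := fun z hz =>
    hΩ.frontier_eq ▸ ⟨hΓ.subset_closure_unboundedComponent hz, fun hzΩ => hzΩ.1 hz⟩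
  obtain ⟨C, hC, hcomp⟩ := hΦ.exists_rho_le_mul_rho hΩ
    (unboundedComponent_mem_cobounded hΓ.isCompact.isBounded)
    (hΓq.isLinearlyLocallyConnected_unboundedComponent hΓ)
  exact ⟨C, hC, fun δ hδ z hz ζ hζ => hcomp δ hδ z (hfrontier hz) ζ (hfrontier hζ)⟩

theorem IsQuasismooth.exists_setLIntegral_norm_rpow_le (hΓq : IsQuasismooth Γ Λ)
    (hΓ : IsJordanCurve Γ) (hΦ : IsExtConformal (unboundedComponent Γ) Φ) (hc₃ : 0 < c₃)
    (hc₄ : 0 ≤ c₄) (hr : 1 / 2 < r) :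
    ∃ K > 0, ∀ δ > 0, ∀ ζ ∈ Γ, ∀ q : ℂ → ℂ,
      (∀ z ∈ Γ, dist ζ z ≤ rho (unboundedComponent Γ) Φ δ z → ‖q z‖ ≤ c₃) →
      (∀ z ∈ Γ, rho (unboundedComponent Γ) Φ δ z < dist ζ z →
        ‖q z‖ ≤ c₄ * (rho (unboundedComponent Γ) Φ δ ζ / dist ζ z) ^ 2) →
      ∫⁻ z in Γ, ENNReal.ofReal (‖q z‖ ^ r) ∂μH[1] ≤
        ENNReal.ofReal (K * rho (unboundedComponent Γ) Φ δ ζ) := by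
  obtain ⟨C, -, hcomp⟩ := hΓq.exists_rho_le_mul_rho hΓ hΦ
  have hΛ := hΓq.1
  have hdecay_pos : 0 < 1 - (2 : ℝ) ^ (1 - 2 * r) :=
    sub_pos.2 (Real.rpow_lt_one_of_one_lt_of_neg one_lt_two (by linarith))
  let M := c₃ * (1 + C ^ 2) + 4 * c₄
  have hM : 0 < M := by positivity
  refine ⟨2 * (Λ + 1) * M ^ r * 2 ^ (2 * r) * (1 - 2 ^ (1 - 2 * r))⁻¹, by positivity,
    fun δ hδ ζ hζ q hnear hfar => ?_⟩
  have hρ : 0 < rho (unboundedComponent Γ) Φ δ ζ := hΦ.rho_pos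
    (isOpen_unboundedComponent hΓ.isCompact) hδ fun hζΩ => hζΩ.1 hζ
  have hq (z : ℂ) (hz : z ∈ Γ) := le_and_mul_sq_le_of_near_of_far dist_nonneg
    hρ hc₃.le hc₄ infDist_le_infDist_add_dist (hcomp δ hδ z hz ζ hζ) (hnear z hz)
    (hfar z hz)
  refine setLIntegral_le_of_rpow_decay (ζ := ζ) (by linarith) (by positivity) (fun R _ => ?_) hρ
    (by positivity) (fun z hz => ?_) fun z hz => ?_
  · refine (hΓq.hausdorffMeasure_inter_closedBall_le hΓ hζ R).trans_eq ?_
    rw [mul_assoc, ENNReal.ofReal_mul zero_le_two, ENNReal.ofReal_ofNat]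
  · exact Real.rpow_le_rpow (norm_nonneg _) (hq z hz).1 (by linarith)
  · have hpow := Real.rpow_le_rpow (by positivity) (hq z hz).2 (by linarith : 0 ≤ r)
    rwa [Real.mul_rpow (norm_nonneg _) (by positivity), Real.mul_rpow hM.le (by positivity),
      ← Real.rpow_two, ← Real.rpow_two, ← Real.rpow_mul dist_nonneg, ← Real.rpow_mul hρ.le,
      dist_comm] at hpow

theorem IsJordanCurve.exists_le_setLIntegral_norm_rpow (hΓ : IsJordanCurve Γ)
    (hΦ : IsExtConformal (unboundedComponent Γ) Φ) (hc₃ : 0 < c₃) (hr : 0 ≤ r) (δ₀ : ℝ) :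
    ∃ L > 0, ∀ δ > 0, δ ≤ δ₀ → ∀ ζ ∈ Γ, ∀ q : ℂ → ℂ,
      (∀ z ∈ Γ, dist ζ z ≤ rho (unboundedComponent Γ) Φ δ z → 1 / c₃ ≤ ‖q z‖) →
      ENNReal.ofReal (L * rho (unboundedComponent Γ) Φ δ ζ) ≤
        ∫⁻ z in Γ, ENNReal.ofReal (‖q z‖ ^ r) ∂μH[1] := by
  obtain ⟨R, hR, hρR⟩ := hΦ.exists_forall_rho_le hΓ.isCompact.isBounded δ₀
  obtain ⟨D, hD, hfar⟩ := hΓ.exists_pos_forall_exists_le_dist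
  obtain ⟨κ, hκ, hκhalf, hκD⟩ : ∃ κ > 0, κ ≤ 1 / 2 ∧ κ ≤ D / R :=
    ⟨min (1 / 2) (D / R), by positivity, min_le_left _ _, min_le_right _ _⟩
  refine ⟨(1 / c₃) ^ r * κ, by positivity, fun δ hδ hδ₀ ζ hζ q hnear => ?_⟩
  obtain ⟨w, hw, hDw⟩ := hfar ζ
  have hκρ : κ * rho (unboundedComponent Γ) Φ δ ζ ≤ 1 / 2 * rho (unboundedComponent Γ) Φ δ ζ :=
    mul_le_mul_of_nonneg_right hκhalf infDist_nonneg
  rw [mul_assoc]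
  refine ofReal_mul_le_setLIntegral_hausdorffMeasure hΓ.isPreconnected
    hΓ.isCompact.isClosed.measurableSet hζ ⟨w, hw, ?_⟩ (by positivity) fun z hz hzζ => ?_
  · calc κ * rho (unboundedComponent Γ) Φ δ ζ ≤ D / R * R := by
          gcongr
          exacts [infDist_nonneg, hρR δ hδ hδ₀ ζ hζ]
      _ = D := div_mul_cancel₀ _ hR.ne'
      _ ≤ dist w ζ := hDw
  · have hlip : rho (unboundedComponent Γ) Φ δ ζ ≤ rho (unboundedComponent Γ) Φ δ z + dist ζ z :=
      infDist_le_infDist_add_dist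
    rw [dist_comm] at hzζ
    exact Real.rpow_le_rpow (by positivity) (hnear z hz (by linarith)) hr

/-- The decay of `|q| ^ r` along `Γ` has exponent `2r`, which is integrable as soon as
`1 / 2 < r`. -/
theorem kernel_lp_norm_bounds_general (hΓ : IsJordanCurve Γ) (hΓq : IsQuasismooth Γ Λ)
    (hΦ : IsExtConformal (unboundedComponent Γ) Φ) (hc₃ : 0 < c₃) (hc₄ : 0 ≤ c₄)
    (hr : 1 / 2 < r) (δ₀ : ℝ) :
    ∃ c₇ > 0, ∀ δ > 0, δ ≤ δ₀ → ∀ ζ ∈ Γ, ∀ q : ℂ → ℂ,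
      AEStronglyMeasurable q (μH[1].restrict Γ) →
      (∀ z ∈ Γ, dist ζ z ≤ rho (unboundedComponent Γ) Φ δ z → 1 / c₃ ≤ ‖q z‖ ∧ ‖q z‖ ≤ c₃) →
      (∀ z ∈ Γ, rho (unboundedComponent Γ) Φ δ z < dist ζ z →
        ‖q z‖ ≤ c₄ * (rho (unboundedComponent Γ) Φ δ ζ / dist ζ z) ^ 2) →
      rho (unboundedComponent Γ) Φ δ ζ / c₇ ≤ ∫ z in Γ, ‖q z‖ ^ r ∂μH[1] ∧
        ∫ z in Γ, ‖q z‖ ^ r ∂μH[1] ≤ c₇ * rho (unboundedComponent Γ) Φ δ ζ := by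
  obtain ⟨K, hK, hupper⟩ := hΓq.exists_setLIntegral_norm_rpow_le hΓ hΦ hc₃ hc₄ hr
  obtain ⟨L, hL, hlower⟩ :=
    hΓ.exists_le_setLIntegral_norm_rpow hΦ hc₃ (by linarith : 0 ≤ r) δ₀
  refine ⟨max K L⁻¹, by positivity, fun δ hδ hδ₀ ζ hζ q hq hnear hfar => ?_⟩
  have hρ : 0 ≤ rho (unboundedComponent Γ) Φ δ ζ := infDist_nonneg
  have hle := hupper δ hδ ζ hζ q (fun z hz h => (hnear z hz h).2) hfar
  have hge := hlower δ hδ hδ₀ ζ hζ q fun z hz h => (hnear z hz h).1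
  rw [integral_eq_lintegral_of_nonneg_ae (Eventually.of_forall fun z => by positivity)
    (hq.norm.aemeasurable.pow_const r).aestronglyMeasurable]
  constructor
  · calc rho (unboundedComponent Γ) Φ δ ζ / max K L⁻¹
        ≤ rho (unboundedComponent Γ) Φ δ ζ / L⁻¹ := by gcongr; exact le_max_right _ _
      _ = L * rho (unboundedComponent Γ) Φ δ ζ := by rw [div_inv_eq_mul, mul_comm]
      _ ≤ _ := (ENNReal.ofReal_le_iff_le_toReal
          (hle.trans_lt ENNReal.ofReal_lt_top).ne).1 hge
  · refine (ENNReal.toReal_le_of_le_ofReal (by positivity) hle).trans ?_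
    gcongr
    exact le_max_left _ _

end Kernel

/-- Lemma 3.3 / (3.1v): for every `r ≥ 1` and bounds `c₃, c₄ > 0` there is
`c₇ = c₇(Γ,r,c₃,c₄) > 0` such that for every `n`, every `ζ ∈ Γ` and every Borel `q : Γ → ℂ`
with `1/c₃ ≤ |q(z)| ≤ c₃` for `|ζ-z| ≤ ρ_{1/n}(z)` and
`|q(z)| ≤ c₄ (ρ_{1/n}(ζ)/|ζ-z|)²` for `|ζ-z| > ρ_{1/n}(z)`, one has
`ρ_{1/n}(ζ)/c₇ ≤ ∫_Γ |q(z)|^r |dz| ≤ c₇ ρ_{1/n}(ζ)`. -/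
theorem kernel_lp_norm_bounds
    (Γ : Set ℂ) (Λ : ℝ) (hΓJ : IsJordanCurve Γ) (hΓq : IsQuasismooth Γ Λ)
    (Φ : ℂ → ℂ) (hΦ : IsExtConformal (unboundedComponent Γ) Φ) :
    ∀ c₃ c₄ r : ℝ, 0 < c₃ → 0 < c₄ → 1 ≤ r → ∃ c₇ > (0:ℝ),
      ∀ (n : ℕ), 0 < n → ∀ ζ ∈ Γ, ∀ q : ℂ → ℂ, Measurable q →
      (∀ z ∈ Γ, dist ζ z ≤ rho (unboundedComponent Γ) Φ (1/(n:ℝ)) z →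
        1/c₃ ≤ ‖q z‖ ∧ ‖q z‖ ≤ c₃) →
      (∀ z ∈ Γ, rho (unboundedComponent Γ) Φ (1/(n:ℝ)) z < dist ζ z →
        ‖q z‖ ≤ c₄ * (rho (unboundedComponent Γ) Φ (1/(n:ℝ)) ζ / dist ζ z) ^ 2) →
      rho (unboundedComponent Γ) Φ (1/(n:ℝ)) ζ / c₇ ≤ (∫ z in Γ, ‖q z‖ ^ r ∂μH[1]) ∧
        (∫ z in Γ, ‖q z‖ ^ r ∂μH[1]) ≤ c₇ * rho (unboundedComponent Γ) Φ (1/(n:ℝ)) ζ := by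
  intro c₃ c₄ r hc₃ hc₄ hr
  obtain ⟨c₇, hc₇, hbounds⟩ :=
    kernel_lp_norm_bounds_general hΓJ hΓq hΦ hc₃ hc₄.le (by linarith : 1 / 2 < r) 1
  exact ⟨c₇, hc₇, fun n hn ζ hζ q hq => hbounds _ (by positivity)
    (div_le_one_of_le₀ (mod_cast hn) n.cast_nonneg) ζ hζ q hq.aestronglyMeasurable⟩
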